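/- arXiv:2406.10195 — 5 statements merged into one kernel-verified Lean document; each statement's English description precedes it below -/
import Mathlib

section
/- Let U be a unitary on (ℂ²)^{⊗N} and suppose there exist a vector |φ⟩ ∈ (ℂ²)^{⊗N} and isometries V_k : ℂ² → ℂ² ⊗ ℂ² (V_k† V_k = 𝟙_2) for k = 1, …, N such that (V_1 ⊗ ⋯ ⊗ V_N)|φ⟩ = |U⟩, the site-wise vectorization of U. Then U is local-unitary equivalent to a phase unitary: there exist single-qubit unitaries v_1, …, v_N, w_1, …, w_N ∈ U(2) and real phases θ_{i_1 … i_N} such that (v_1 ⊗ ⋯ ⊗ v_N) U (w_1 ⊗ ⋯ ⊗ w_N) = Σ_{i_1, …, i_N ∈ {0,1}} e^{i θ_{i_1 … i_N}} |i_1 … i_N⟩⟨i_1 … i_N|. -/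
open Matrix

noncomputable section

open scoped Kronecker

/-- A singular 2×2 matrix annihilates the second column of some unitary. -/
lemma exists_unitary_null (A : Matrix (Fin 2) (Fin 2) ℂ) (h : A.det = 0) :
    ∃ w ∈ Matrix.unitaryGroup (Fin 2) ℂ, ∀ a, (A * w) a 1 = 0 := by
  obtain ⟨b, hb0, hb⟩ := Matrix.exists_mulVec_eq_zero_iff.mpr h
  set n : ℝ := Complex.normSq (b 0) + Complex.normSq (b 1) with hn
  have hpos : 0 < n := by
    have h0 := Complex.normSq_nonneg (b 0)
    have h1 := Complex.normSq_nonneg (b 1)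
    rcases (add_nonneg h0 h1).lt_or_eq with h | h
    · exact h
    · exfalso
      apply hb0
      have e0 : Complex.normSq (b 0) = 0 := by linarith
      have e1 : Complex.normSq (b 1) = 0 := by linarith
      ext i
      fin_cases i
      · simpa using e0
      · simpa using e1
  set s : ℂ := (((Real.sqrt n)⁻¹ : ℝ) : ℂ) with hs
  have hss : s * s * (b 0 * star (b 0) + b 1 * star (b 1)) = 1 := by
    have : (b 0 * star (b 0) + b 1 * star (b 1)) = ((n : ℝ) : ℂ) := by
      simp [hn, Complex.mul_conj]
    rw [this, hs, ← Complex.ofReal_mul, ← Complex.ofReal_mul, ← mul_inv,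
      Real.mul_self_sqrt hpos.le, inv_mul_cancel₀ hpos.ne']
    simp
  have hst : star s = s := by simp [hs]
  refine ⟨!![-(s * star (b 1)), s * b 0; s * star (b 0), s * b 1], ?_, ?_⟩
  · rw [Matrix.mem_unitaryGroup_iff]
    ext i j
    fin_cases i <;> fin_cases j <;>
      simp [Matrix.mul_apply, Fin.sum_univ_two, Matrix.star_apply] <;>
      simp only [← Complex.star_def, hst] <;> first | linear_combination hss | ring
  · intro a
    have := congrFun hb a
    simp [Matrix.mulVec, dotProduct, Fin.sum_univ_two] at this
    simp [Matrix.mul_apply, Fin.sum_univ_two]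
    linear_combination s * this

lemma exists_unitary_corner (A : Matrix (Fin 2) (Fin 2) ℂ) (h : A.det = 0) :
    ∃ v ∈ Matrix.unitaryGroup (Fin 2) ℂ, ∃ w ∈ Matrix.unitaryGroup (Fin 2) ℂ,
      (∀ a, (v * A * w) a 1 = 0) ∧ (∀ a, (v * A * w) 1 a = 0) := by
  obtain ⟨w, hw, hw'⟩ := exists_unitary_null A h
  obtain ⟨v, hv, hv'⟩ := exists_unitary_null Aᴴ (by simp [Matrix.det_conjTranspose, h])
  refine ⟨star v, Unitary.star_mem hv, w, hw, ?_, ?_⟩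
  · intro a
    rw [Matrix.mul_assoc, Matrix.mul_apply]
    simp [hw']
  · intro a
    rw [Matrix.mul_apply]
    have : ∀ c, (star v * A) 1 c = 0 := by
      intro c
      have := congrArg star (hv' c)
      rw [← Matrix.conjTranspose_apply, Matrix.conjTranspose_mul,
        Matrix.conjTranspose_conjTranspose] at this
      simpa [Matrix.star_eq_conjTranspose] using this
    simp [this]

/-- A unitary with three proportional blocks. -/
lemma core {ι : Type*} [Fintype ι] [DecidableEq ι] [Nonempty ι]
    (A0 A1 : Matrix (Fin 2) (Fin 2) ℂ) (B0 B1 : Matrix ι ι ℂ)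
    (h1 : ∀ a, A0 a 1 = 0) (h2 : ∀ a, A0 1 a = 0)
    (hW : A0 ⊗ₖ B0 + A1 ⊗ₖ B1 ∈ Matrix.unitaryGroup (Fin 2 × ι) ℂ) :
    ∃ v ∈ Matrix.unitaryGroup (Fin 2) ℂ, ∀ (R S : Matrix ι ι ℂ) (a b : Fin 2) (i j : ι),
      a ≠ b → ((v * A0) ⊗ₖ (R * B0 * S) + (v * A1) ⊗ₖ (R * B1 * S)) (a, i) (b, j) = 0 := by
  have hc := Matrix.mem_unitaryGroup_iff'.mp hW
  have hr := Matrix.mem_unitaryGroup_iff.mp hW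
  have c11 : (star (A1 0 1) * A1 0 1 + star (A1 1 1) * A1 1 1) • (B1ᴴ * B1) = 1 := by
    ext i j
    have := congrFun (congrFun hc (1, i)) (1, j)
    simp [Matrix.mul_apply, Fintype.sum_prod_type, Fin.sum_univ_two, h1, h2, Matrix.star_apply,
      Matrix.one_apply] at this
    simp [Matrix.mul_apply, Matrix.one_apply, Finset.mul_sum, ← this, ← Finset.sum_add_distrib]
    refine Finset.sum_congr rfl fun x _ => ?_
    ring
  have r11 : (star (A1 1 0) * A1 1 0 + star (A1 1 1) * A1 1 1) • (B1 * B1ᴴ) = 1 := by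
    ext i j
    have := congrFun (congrFun hr (1, i)) (1, j)
    simp [Matrix.mul_apply, Fintype.sum_prod_type, Fin.sum_univ_two, h1, h2, Matrix.star_apply,
      Matrix.one_apply] at this
    simp [Matrix.mul_apply, Matrix.one_apply, Finset.mul_sum, ← this, ← Finset.sum_add_distrib]
    refine Finset.sum_congr rfl fun x _ => ?_
    ring
  have c10 : (star (A1 0 1)) • (B1ᴴ * (A0 0 0 • B0 + A1 0 0 • B1))
      + (star (A1 1 1) * A1 1 0) • (B1ᴴ * B1) = 0 := by
    ext i j
    have := congrFun (congrFun hc (1, i)) (0, j)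
    simp [Matrix.mul_apply, Fintype.sum_prod_type, Fin.sum_univ_two, h1, h2, Matrix.star_apply,
      Matrix.one_apply] at this
    simp [Matrix.mul_apply, Matrix.one_apply, Finset.mul_sum, ← this, ← Finset.sum_add_distrib]
    refine Finset.sum_congr rfl fun x _ => ?_
    ring
  set γ : ℂ := star (A1 0 1) * A1 0 1 + star (A1 1 1) * A1 1 1 with hγ
  set γ' : ℂ := star (A1 1 0) * A1 1 0 + star (A1 1 1) * A1 1 1 with hγ'
  have hγ0 : γ ≠ 0 := by
    intro h
    rw [h, zero_smul] at c11
    exact zero_ne_one c11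
  have c11' : B1ᴴ * B1 = γ⁻¹ • 1 := by
    rw [← c11, smul_smul, inv_mul_cancel₀ hγ0, one_smul]
  have hinv : B1 * (γ • B1ᴴ) = 1 := by
    apply mul_eq_one_comm.mp
    rw [Matrix.smul_mul, c11]
  have hγγ : γ' = γ := by
    have h3 : (γ : ℂ) • (B1 * B1ᴴ) = 1 := by rw [← Matrix.mul_smul, hinv]
    have h4 : B1 * B1ᴴ = γ⁻¹ • 1 := by
      rw [← h3, smul_smul, inv_mul_cancel₀ hγ0, one_smul]
    rw [h4, smul_smul] at r11
    obtain ⟨i⟩ := ‹Nonempty ι›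
    have := congrFun (congrFun r11 i) i
    simp at this
    field_simp at this
    exact this
  by_cases hp : A1 0 1 = 0
  · have hq : A1 1 0 = 0 := by
      have : star (A1 1 0) * A1 1 0 = 0 := by
        have := hγγ
        rw [hγ, hγ', hp] at this
        simpa using this
      simpa using this
    refine ⟨1, one_mem _, ?_⟩
    intro R S a b i j hab
    fin_cases a <;> fin_cases b <;> simp_all
  · -- dependent case
    set C := A0 0 0 • B0 + A1 0 0 • B1 with hC
    obtain ⟨l, hl⟩ : ∃ l : ℂ, C = l • B1 := by
      refine ⟨-((star (A1 0 1))⁻¹ * (star (A1 1 1) * A1 1 0)), ?_⟩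
      have hp' : star (A1 0 1) ≠ 0 := by simpa using hp
      have e1 : star (A1 0 1) • (B1ᴴ * C) = -((star (A1 1 1) * A1 1 0) • (B1ᴴ * B1)) :=
        eq_neg_of_add_eq_zero_left c10
      have e2 : B1ᴴ * C = B1ᴴ * (-((star (A1 0 1))⁻¹ * (star (A1 1 1) * A1 1 0)) • B1) := by
        rw [Matrix.mul_smul, neg_smul, mul_smul, ← smul_neg, ← e1, smul_smul,
          inv_mul_cancel₀ hp', one_smul]
      have e3 := congrArg (fun X => (γ • B1) * X) e2
      have h5 : (γ • B1) * B1ᴴ = 1 := by rw [Matrix.smul_mul, ← Matrix.mul_smul, hinv]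
      simpa only [← Matrix.mul_assoc, h5, Matrix.one_mul] using e3
    set A' : Matrix (Fin 2) (Fin 2) ℂ := !![l, A1 0 1; A1 1 0, A1 1 1] with hA'
    -- any sandwich
    have key : ∀ (v : Matrix (Fin 2) (Fin 2) ℂ) (R S : Matrix ι ι ℂ),
        (v * A0) ⊗ₖ (R * B0 * S) + (v * A1) ⊗ₖ (R * B1 * S) = (v * A') ⊗ₖ (R * B1 * S) := by
      intro v R S
      have hm : A0 0 0 • (R * B0 * S) + A1 0 0 • (R * B1 * S) = l • (R * B1 * S) := by
        have := congrArg (fun X => R * X * S) hl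
        simpa [hC, Matrix.mul_add, Matrix.add_mul] using this
      ext ⟨a, i⟩ ⟨b, j⟩
      have hm' := congrFun (congrFun hm i) j
      simp only [Matrix.add_apply, Matrix.smul_apply, smul_eq_mul] at hm'
      simp only [Matrix.add_apply, Matrix.kroneckerMap_apply]
      generalize (R * B0 * S) i j = x at *
      generalize (R * B1 * S) i j = y at *
      fin_cases b <;> simp [Matrix.mul_apply, Fin.sum_univ_two, h1, h2, hA']
      linear_combination v a 0 * hm'
    have key1 : A0 ⊗ₖ B0 + A1 ⊗ₖ B1 = A' ⊗ₖ B1 := by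
      simpa using key 1 1 1
    have hA'u : A'ᴴ * A' = γ • 1 := by
      have h6 : (A'ᴴ * A') ⊗ₖ (B1ᴴ * B1) = 1 := by
        rw [key1, Matrix.star_eq_conjTranspose, Matrix.conjTranspose_kronecker,
          ← Matrix.mul_kronecker_mul] at hc
        exact hc
      obtain ⟨i⟩ := ‹Nonempty ι›
      ext a b
      have := congrFun (congrFun h6 (a, i)) (b, i)
      rw [Matrix.kroneckerMap_apply, c11'] at this
      simp only [Matrix.smul_apply, Matrix.one_apply, Prod.mk.injEq, and_true, if_true,
        smul_eq_mul, mul_one] at this ⊢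
      rw [← this]
      field_simp
    obtain ⟨g, hg, hgpos⟩ : ∃ g : ℝ, γ = g ∧ 0 < g := by
      refine ⟨Complex.normSq (A1 0 1) + Complex.normSq (A1 1 1), ?_, ?_⟩
      · simp [hγ, Complex.normSq_eq_conj_mul_self]
      · have := Complex.normSq_pos.mpr hp
        have := Complex.normSq_nonneg (A1 1 1)
        linarith
    set s : ℂ := (((Real.sqrt g)⁻¹ : ℝ) : ℂ) with hs
    have hst : star s = s := by simp [hs]
    have hss : s * s * γ = 1 := by
      rw [hg, hs, ← Complex.ofReal_mul, ← Complex.ofReal_mul, ← mul_inv,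
        Real.mul_self_sqrt hgpos.le, inv_mul_cancel₀ hgpos.ne']
      simp
    refine ⟨s • A'ᴴ, ?_, ?_⟩
    · rw [Matrix.mem_unitaryGroup_iff, Matrix.star_eq_conjTranspose, Matrix.conjTranspose_smul,
        Matrix.conjTranspose_conjTranspose, hst, Matrix.smul_mul, Matrix.mul_smul, hA'u, smul_smul,
        smul_smul, hss, one_smul]
    · intro R S a b i j hab
      rw [key, Matrix.kroneckerMap_apply, Matrix.smul_mul, hA'u]
      simp [Matrix.one_apply, hab]

lemma site_singular {ι : Type*} [Fintype ι] [DecidableEq ι] [Nonempty ι]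
    (A0 A1 : Matrix (Fin 2) (Fin 2) ℂ) (B0 B1 : Matrix ι ι ℂ) (hdet : A0.det = 0)
    (hW : A0 ⊗ₖ B0 + A1 ⊗ₖ B1 ∈ Matrix.unitaryGroup (Fin 2 × ι) ℂ) :
    ∃ v ∈ Matrix.unitaryGroup (Fin 2) ℂ, ∃ w ∈ Matrix.unitaryGroup (Fin 2) ℂ,
      ∀ (R S : Matrix ι ι ℂ) (a b : Fin 2) (i j : ι),
      a ≠ b → ((v ⊗ₖ R) * (A0 ⊗ₖ B0 + A1 ⊗ₖ B1) * (w ⊗ₖ S)) (a, i) (b, j) = 0 := by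
  obtain ⟨v, hv, w, hw, h1, h2⟩ := exists_unitary_corner A0 hdet
  have hk : ∀ (v w : Matrix (Fin 2) (Fin 2) ℂ) (R S : Matrix ι ι ℂ),
      (v ⊗ₖ R) * (A0 ⊗ₖ B0 + A1 ⊗ₖ B1) * (w ⊗ₖ S) =
      (v * A0 * w) ⊗ₖ (R * B0 * S) + (v * A1 * w) ⊗ₖ (R * B1 * S) := by
    intro v w R S
    simp only [Matrix.mul_add, Matrix.add_mul, ← Matrix.mul_kronecker_mul]
  have hW' : (v * A0 * w) ⊗ₖ B0 + (v * A1 * w) ⊗ₖ B1 ∈ Matrix.unitaryGroup (Fin 2 × ι) ℂ := by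
    have := hk v w 1 1
    simp only [Matrix.one_mul, Matrix.mul_one] at this
    rw [← this]
    exact mul_mem (mul_mem (Matrix.kronecker_mem_unitary hv (one_mem _)) hW)
      (Matrix.kronecker_mem_unitary hw (one_mem _))
  obtain ⟨u, hu, h⟩ := core _ _ B0 B1 h1 h2 hW'
  refine ⟨u * v, mul_mem hu hv, w, hw, ?_⟩
  intro R S a b i j hab
  rw [hk]
  simpa only [Matrix.mul_assoc] using h R S a b i j hab

lemma site {ι : Type*} [Fintype ι] [DecidableEq ι] [Nonempty ι]
    (A0 A1 : Matrix (Fin 2) (Fin 2) ℂ) (B0 B1 : Matrix ι ι ℂ)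
    (hW : A0 ⊗ₖ B0 + A1 ⊗ₖ B1 ∈ Matrix.unitaryGroup (Fin 2 × ι) ℂ) :
    ∃ v ∈ Matrix.unitaryGroup (Fin 2) ℂ, ∃ w ∈ Matrix.unitaryGroup (Fin 2) ℂ,
      ∀ (R S : Matrix ι ι ℂ) (a b : Fin 2) (i j : ι),
      a ≠ b → ((v ⊗ₖ R) * (A0 ⊗ₖ B0 + A1 ⊗ₖ B1) * (w ⊗ₖ S)) (a, i) (b, j) = 0 := by
  by_cases hd : A1.det = 0
  · rw [add_comm] at hW ⊢
    exact site_singular A1 A0 B1 B0 hd hW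
  · obtain ⟨t, ht⟩ : ∃ t : ℂ, (A0 + t • A1).det = 0 := by
      obtain ⟨r, hr⟩ := IsAlgClosed.exists_eq_mul_self (discrim A1.det
        (A0 0 0 * A1 1 1 + A1 0 0 * A0 1 1 - A0 0 1 * A1 1 0 - A1 0 1 * A0 1 0) A0.det)
      obtain ⟨t, ht⟩ := exists_quadratic_eq_zero hd ⟨r, hr⟩
      refine ⟨t, ?_⟩
      rw [Matrix.det_fin_two] at ht ⊢
      rw [Matrix.det_fin_two] at ht
      simp only [Matrix.add_apply, Matrix.smul_apply, smul_eq_mul]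
      linear_combination ht
    have he : A0 ⊗ₖ B0 + A1 ⊗ₖ B1 = (A0 + t • A1) ⊗ₖ B0 + A1 ⊗ₖ (B1 - t • B0) := by
      ext ⟨a, i⟩ ⟨b, j⟩
      simp
      ring
    rw [he] at hW ⊢
    exact site_singular _ _ _ _ ht hW

/-- Product operators are unitary. -/
lemma prod_unitary {N : ℕ} (v : Fin N → Matrix (Fin 2) (Fin 2) ℂ)
    (hv : ∀ k, v k ∈ Matrix.unitaryGroup (Fin 2) ℂ) :
    (Matrix.of fun i j : Fin N → Fin 2 => ∏ k, v k (i k) (j k)) ∈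
      Matrix.unitaryGroup (Fin N → Fin 2) ℂ := by
  rw [Matrix.mem_unitaryGroup_iff]
  ext i j
  have h : ∀ k, ∑ x, v k (i k) x * star (v k (j k) x) = (1 : Matrix (Fin 2) (Fin 2) ℂ) (i k) (j k) := by
    intro k
    rw [← Matrix.mem_unitaryGroup_iff.mp (hv k)]
    simp [Matrix.mul_apply, Matrix.star_apply]
  have : (∏ k, ∑ x, v k (i k) x * star (v k (j k) x)) =
      ∑ x : Fin N → Fin 2, ∏ k, v k (i k) (x k) * star (v k (j k) (x k)) := by
    rw [Finset.prod_univ_sum, Fintype.piFinset_univ]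
  simp only [Matrix.mul_apply, Matrix.star_apply, Matrix.of_apply, star_prod,
    ← Finset.prod_mul_distrib]
  rw [← this]
  simp only [h]
  by_cases hij : i = j
  · subst hij
    simp
  · rw [Matrix.one_apply_ne hij]
    obtain ⟨k, hk⟩ := Function.ne_iff.mp hij
    exact Finset.prod_eq_zero (Finset.mem_univ k) (Matrix.one_apply_ne hk)

/-- In coordinates split at site `k`, product operators are Kronecker products. -/
lemma prod_split {N : ℕ} (k : Fin N) (v : Fin N → Matrix (Fin 2) (Fin 2) ℂ) :
    (Matrix.of fun i j : Fin N → Fin 2 => ∏ l, v l (i l) (j l)).submatrix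
      (Equiv.funSplitAt k (Fin 2)).symm (Equiv.funSplitAt k (Fin 2)).symm =
    v k ⊗ₖ (Matrix.of fun i j : {l // l ≠ k} → Fin 2 => ∏ l : {l // l ≠ k}, v l (i l) (j l)) := by
  ext ⟨a, i⟩ ⟨b, j⟩
  simp only [Matrix.submatrix_apply, Matrix.of_apply, Matrix.kroneckerMap_apply]
  rw [Fintype.prod_eq_mul_prod_subtype_ne _ k]
  congr 1
  · simp [Equiv.funSplitAt, Equiv.piSplitAt]
  · refine Finset.prod_congr rfl fun l _ => ?_
    simp [Equiv.funSplitAt, Equiv.piSplitAt, l.2]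

lemma site_full {N : ℕ}
    (U : Matrix (Fin N → Fin 2) (Fin N → Fin 2) ℂ)
    (hU : U ∈ Matrix.unitaryGroup (Fin N → Fin 2) ℂ)
    (φ : (Fin N → Fin 2) → ℂ)
    (V : Fin N → Matrix (Fin 2 × Fin 2) (Fin 2) ℂ)
    (hvec : ∀ z : Fin N → Fin 2 × Fin 2,
      (∑ x, (∏ k, V k (z k) (x k)) * φ x) = U (fun k => (z k).1) (fun k => (z k).2))
    (k : Fin N) :
    ∃ v ∈ Matrix.unitaryGroup (Fin 2) ℂ, ∃ w ∈ Matrix.unitaryGroup (Fin 2) ℂ,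
      ∀ v' w' : Fin N → Matrix (Fin 2) (Fin 2) ℂ, v' k = v → w' k = w →
      ∀ i j : Fin N → Fin 2, i k ≠ j k →
        ((Matrix.of fun i j : Fin N → Fin 2 => ∏ k, v' k (i k) (j k)) * U *
            (Matrix.of fun i j : Fin N → Fin 2 => ∏ k, w' k (i k) (j k))) i j = 0 := by
  set e := Equiv.funSplitAt k (Fin 2) with he
  let A : Fin 2 → Matrix (Fin 2) (Fin 2) ℂ := fun x => Matrix.of fun a b => V k (a, b) x
  let B : Fin 2 → Matrix ({l // l ≠ k} → Fin 2) ({l // l ≠ k} → Fin 2) ℂ := fun x =>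
    Matrix.of fun i j => ∑ y : {l // l ≠ k} → Fin 2,
      (∏ l : {l // l ≠ k}, V l (i l, j l) (y l)) * φ (e.symm (x, y))
  have hdec : U.submatrix e.symm e.symm = A 0 ⊗ₖ B 0 + A 1 ⊗ₖ B 1 := by
    ext ⟨a, i⟩ ⟨b, j⟩
    have h := hvec (fun l => (e.symm (a, i) l, e.symm (b, j) l))
    simp only [Matrix.submatrix_apply]
    refine h.symm.trans ?_
    rw [← e.symm.sum_comp, Fintype.sum_prod_type, Fin.sum_univ_two]
    have hx : ∀ (x : Fin 2), ∑ y, (∏ l, V l (e.symm (a, i) l, e.symm (b, j) l) (e.symm (x, y) l)) *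
        φ (e.symm (x, y)) = (A x ⊗ₖ B x) (a, i) (b, j) := by
      intro x
      simp only [Matrix.kroneckerMap_apply, A, B, Matrix.of_apply, Finset.mul_sum]
      refine Finset.sum_congr rfl fun y _ => ?_
      rw [Fintype.prod_eq_mul_prod_subtype_ne _ k, mul_assoc]
      congr 1
      · simp [he, Equiv.funSplitAt, Equiv.piSplitAt]
      · congr 1
        refine Finset.prod_congr rfl fun l _ => ?_
        simp [he, Equiv.funSplitAt, Equiv.piSplitAt, l.2]
    rw [hx, hx]
    rfl
  have hW : A 0 ⊗ₖ B 0 + A 1 ⊗ₖ B 1 ∈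
      Matrix.unitaryGroup (Fin 2 × ({l // l ≠ k} → Fin 2)) ℂ := by
    rw [← hdec, Matrix.mem_unitaryGroup_iff, Matrix.star_eq_conjTranspose,
      Matrix.conjTranspose_submatrix, Matrix.submatrix_mul_equiv, ← Matrix.star_eq_conjTranspose,
      Matrix.mem_unitaryGroup_iff.mp hU, Matrix.submatrix_one_equiv]
  obtain ⟨v, hv, w, hw, h⟩ := site _ _ _ _ hW
  refine ⟨v, hv, w, hw, ?_⟩
  intro v' w' hv' hw' i j hij
  have h2 := h (Matrix.of fun i j : {l // l ≠ k} → Fin 2 => ∏ l : {l // l ≠ k}, v' l (i l) (j l))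
    (Matrix.of fun i j : {l // l ≠ k} → Fin 2 => ∏ l : {l // l ≠ k}, w' l (i l) (j l)) (i k) (j k) (e i).2 (e j).2 hij
  rw [← hdec, ← hv', ← hw', ← prod_split, ← prod_split, ← he, Matrix.submatrix_mul_equiv,
    Matrix.submatrix_mul_equiv, Matrix.submatrix_apply] at h2
  have hi : ∀ i : Fin N → Fin 2, e.symm (i k, (e i).2) = i := by
    intro i
    rw [Equiv.symm_apply_eq]
    rfl
  rwa [hi, hi] at h2

/-- If the site-wise vectorization `|U⟩` of an `N`-qubit unitary `U`
can be written as `(V_1 ⊗ ⋯ ⊗ V_N)|φ⟩` for isometries `V_k : ℂ² → ℂ² ⊗ ℂ²` (i.e. `U`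
admits an LME state `φ` of local dimension 2), then `U` is local-unitary equivalent to a
unitary diagonal in the computational product basis. -/
theorem stmt_13 (N : ℕ) (hN : 1 ≤ N)
    (U : Matrix (Fin N → Fin 2) (Fin N → Fin 2) ℂ)
    (hU : U ∈ Matrix.unitaryGroup (Fin N → Fin 2) ℂ)
    (φ : (Fin N → Fin 2) → ℂ)
    (V : Fin N → Matrix (Fin 2 × Fin 2) (Fin 2) ℂ)
    (hV : ∀ k, (V k)ᴴ * V k = 1)
    (hvec : ∀ z : Fin N → Fin 2 × Fin 2,
      (∑ x, (∏ k, V k (z k) (x k)) * φ x) = U (fun k => (z k).1) (fun k => (z k).2)) :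
    ∃ v w : Fin N → Matrix (Fin 2) (Fin 2) ℂ,
      (∀ k, v k ∈ Matrix.unitaryGroup (Fin 2) ℂ) ∧
      (∀ k, w k ∈ Matrix.unitaryGroup (Fin 2) ℂ) ∧
      ∃ θ : (Fin N → Fin 2) → ℝ,
        (Matrix.of fun i j => ∏ k, v k (i k) (j k)) * U *
            (Matrix.of fun i j => ∏ k, w k (i k) (j k)) =
          Matrix.diagonal (fun i => Complex.exp (θ i * Complex.I)) := by
  choose v hv w hw h using site_full U hU φ V hvec
  refine ⟨v, w, hv, hw, ?_⟩
  have hD := mul_mem (mul_mem (prod_unitary v hv) hU) (prod_unitary w hw)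
  have hoff : ∀ i j : Fin N → Fin 2, i ≠ j → ((Matrix.of fun i j : Fin N → Fin 2 => ∏ k, v k (i k) (j k)) * U *
            (Matrix.of fun i j : Fin N → Fin 2 => ∏ k, w k (i k) (j k))) i j = 0 := by
    intro i j hij
    obtain ⟨k, hk⟩ := Function.ne_iff.mp hij
    exact h k v w rfl rfl i j hk
  generalize (Matrix.of fun i j : Fin N → Fin 2 => ∏ k, v k (i k) (j k)) * U *
            (Matrix.of fun i j : Fin N → Fin 2 => ∏ k, w k (i k) (j k)) = D at hD hoff
  refine ⟨fun i => Complex.arg (D i i), ?_⟩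
  ext i j
  by_cases hij : i = j
  · subst hij
    rw [Matrix.diagonal_apply_eq]
    have h1 := congrFun (congrFun (Matrix.mem_unitaryGroup_iff.mp hD) i) i
    rw [Matrix.mul_apply, Finset.sum_eq_single i (fun b _ hb => by rw [hoff i b hb.symm, zero_mul])
      (by simp), Matrix.star_apply, Matrix.one_apply_eq] at h1
    have h2 : ‖D i i‖ = 1 := by
      have := congrArg norm h1
      rw [norm_mul, norm_star, norm_one] at this
      nlinarith [norm_nonneg (D i i)]
    have := Complex.norm_mul_exp_arg_mul_I (D i i)
    rw [h2] at this
    simpa using this.symm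
  · rw [hoff i j hij, Matrix.diagonal_apply_ne _ hij]

end
end

section
/- Every N-qubit (2,2)-locally maximally entanglable state is local-unitary equivalent to a phase state: if a unit vector |ψ⟩ ∈ (ℂ²)^{⊗N} is (2,2)-LME, then there exist single-qubit unitaries u_1, …, u_N ∈ U(2) and real phases θ_{i_1 … i_N} such that |ψ⟩ = (u_1 ⊗ ⋯ ⊗ u_N) · 2^{−N/2} Σ_{i_1, …, i_N ∈ {0,1}} e^{i θ_{i_1 … i_N}} |i_1 … i_N⟩. -/
open Matrix

noncomputable section

abbrev M2 := Matrix (Fin 2) (Fin 2) ℂ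

lemma herm_diag (A : M2) (hA : A.IsHermitian) :
    ∃ U : M2, Uᴴ * U = 1 ∧ U * Uᴴ = 1 ∧
      A = U * diagonal (fun i => (hA.eigenvalues i : ℂ)) * Uᴴ := by
  refine ⟨hA.eigenvectorUnitary, ?_, ?_, ?_⟩
  · exact Matrix.mem_unitaryGroup_iff'.1 hA.eigenvectorUnitary.2
  · exact Matrix.mem_unitaryGroup_iff.1 hA.eigenvectorUnitary.2
  · have := hA.spectral_theorem
    rw [Unitary.conjStarAlgAut_apply] at this
    exact this

lemma svd_aux (W : M2) : ∃ (L R : M2) (μ : Fin 2 → ℂ), Lᴴ * L = 1 ∧ L * Lᴴ = 1 ∧ Rᴴ * R = 1 ∧ R * Rᴴ = 1 ∧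
    W * Wᴴ = L * diagonal μ * Lᴴ ∧ Wᴴ * W = Rᴴ * diagonal μ * R := by
  have h1 : (W * Wᴴ).IsHermitian := isHermitian_mul_conjTranspose_self W
  have h2 : (Wᴴ * W).IsHermitian := isHermitian_conjTranspose_mul_self W
  obtain ⟨L, a1, a2, a3⟩ := herm_diag _ h1
  obtain ⟨R, b1, b2, b3⟩ := herm_diag _ h2
  have : h1.eigenvalues = h2.eigenvalues := by
    rw [Matrix.IsHermitian.eigenvalues_eq_eigenvalues_iff]
    exact Matrix.charpoly_mul_comm _ _
  refine ⟨L, Rᴴ, _, a1, a2, by simpa using b2, by simpa using b1, a3, ?_⟩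
  rw [this]; simpa using b3

lemma traceless_normal (C : M2) (s : ℝ) (hs : 0 < s) (ht : C.trace = 0) (h : C * Cᴴ = (s : ℂ) • 1) :
    ∃ (Q : M2) (d : Fin 2 → ℂ), Qᴴ * Q = 1 ∧ Q * Qᴴ = 1 ∧ C = Q * diagonal d * Qᴴ := by
  have hC2 : C * C = (-C.det) • 1 := by
    have : C 1 1 = - C 0 0 := by
      rw [trace_fin_two] at ht; linear_combination ht
    ext i j
    fin_cases i <;> fin_cases j <;> simp [mul_apply, det_fin_two, this] <;> ring
  have hdet : ‖C.det‖ = s := by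
    have h3 := congrArg det h
    rw [det_mul, det_conjTranspose, det_smul] at h3
    simp only [Fintype.card_fin, det_one, mul_one] at h3
    have h4 : (‖C.det‖ : ℂ)^2 = (s:ℂ)^2 := by
      rw [← h3]; simpa using (Complex.mul_conj' C.det).symm
    have h5 : ‖C.det‖^2 = s^2 := by exact_mod_cast h4
    nlinarith [norm_nonneg C.det]
  obtain ⟨w, hw⟩ : ∃ w : ℂ, w ^ 2 = (s : ℂ) / (-C.det) := by
    exact ⟨_, Complex.cpow_nat_inv_pow _ (n := 2) two_ne_zero⟩
  have hd0 : C.det ≠ 0 := by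
    intro h0; rw [h0] at hdet; simp at hdet; linarith
  have hwn : ‖w‖ = 1 := by
    have : ‖w‖^2 = 1 := by
      rw [← norm_pow, hw, norm_div, norm_neg, hdet]
      simp [abs_of_pos hs, hs.ne']
    nlinarith [norm_nonneg w]
  have hw1 : w * star w = 1 := by
    have := Complex.mul_conj' w
    rw [hwn] at this; simpa using this
  have hs0 : (s:ℂ) ≠ 0 := by exact_mod_cast hs.ne'
  have hH : (w • C).IsHermitian := by
    have e1 : (w • C) * (w • C) = (s:ℂ) • 1 := by
      rw [smul_mul_smul_comm, hC2, smul_smul, ← pow_two, hw]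
      congr 1; field_simp
    have e2 : (w • C) * (w • C)ᴴ = (s:ℂ) • 1 := by
      rw [conjTranspose_smul, smul_mul_smul_comm, h, hw1, one_smul]
    have e3 : (w • C) * ((w • C)ᴴ) = (w • C) * (w • C) := by rw [e1, e2]
    have e4 := congrArg (fun X => (w • C) * X) e3
    simp only [← mul_assoc, e1] at e4
    simp only [smul_mul_assoc, one_mul, mul_smul_comm, mul_one] at e4
    exact smul_right_injective _ hs0 e4
  obtain ⟨Q, q1, q2, q3⟩ := herm_diag _ hH
  refine ⟨Q, fun i => star w * hH.eigenvalues i, q1, q2, ?_⟩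
  have : C = star w • (w • C) := by rw [smul_smul, mul_comm, hw1, one_smul]
  conv_lhs => rw [this, q3]
  have : diagonal (fun i => star w * (hH.eigenvalues i : ℂ)) = star w • diagonal (fun i => (hH.eigenvalues i : ℂ)) := by
    ext i j; simp [diagonal_apply]
  rw [this]; simp

lemma diag_of_comm (A : M2) (μ : Fin 2 → ℂ) (hμ : μ 0 ≠ μ 1) (h : A * diagonal μ = diagonal μ * A) :
    A = diagonal (fun i => A i i) := by
  have e01 := congrFun (congrFun h 0) 1
  have e10 := congrFun (congrFun h 1) 0
  simp only [mul_diagonal, diagonal_mul] at e01 e10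
  have hs := sub_ne_zero.2 hμ
  have z1 : A 0 1 = 0 := by
    apply (mul_eq_zero.1 (show (μ 0 - μ 1) * A 0 1 = 0 by linear_combination -e01)).resolve_left hs
  have z2 : A 1 0 = 0 := by
    apply (mul_eq_zero.1 (show (μ 0 - μ 1) * A 1 0 = 0 by linear_combination e10)).resolve_left hs
  ext i j; fin_cases i <;> fin_cases j <;> simp [z1, z2]

lemma simdiag (A B : M2) (x y c : ℝ) (hx : x ≠ 0) (hy : y ≠ 0)
    (hA : (Aᴴ * A).trace = 1) (hB : (Bᴴ * B).trace = 1) (hAB : (Aᴴ * B).trace = 0)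
    (h1 : (x:ℂ) • (A * Aᴴ) + (y:ℂ) • (B * Bᴴ) = (c:ℂ) • 1)
    (h2 : (x:ℂ) • (Aᴴ * A) + (y:ℂ) • (Bᴴ * B) = (c:ℂ) • 1) :
    ∃ (L R : M2) (d e : Fin 2 → ℂ), L * Lᴴ = 1 ∧ R * Rᴴ = 1 ∧
      A = L * diagonal d * R ∧ B = L * diagonal e * R := by
  have hx' : (x:ℂ) ≠ 0 := by exact_mod_cast hx
  have hy' : (y:ℂ) ≠ 0 := by exact_mod_cast hy
  obtain ⟨L, R, μ, l1, l2, r1, r2, m1, m2⟩ := svd_aux A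
  by_cases hμ : μ 0 = μ 1
  · have hd : diagonal μ = μ 0 • (1 : M2) := by
      ext i j; fin_cases i <;> fin_cases j <;> simp [hμ]
    have m1' : A * Aᴴ = μ 0 • 1 := by rw [m1, hd]; simp [l2]
    have m2' : Aᴴ * A = μ 0 • 1 := by rw [m2, hd]; simp [r1]
    have hμ0 : μ 0 = 1/2 := by
      rw [m2'] at hA; simp [trace_smul] at hA; linear_combination hA/2
    rw [hμ0] at m1' m2'
    have n1 : B * Bᴴ = (((c:ℂ) - x/2)/y) • 1 := by
      rw [m1'] at h1
      have : (y:ℂ) • (B * Bᴴ) = ((c:ℂ) - x/2) • 1 := by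
        rw [eq_sub_of_add_eq' h1, sub_smul, smul_smul]; congr 2; ring
      rw [div_eq_inv_mul, mul_smul, ← this, smul_smul, inv_mul_cancel₀ hy', one_smul]
    have hν : (((c:ℂ) - x/2)/y) = 1/2 := by
      rw [trace_mul_comm, n1] at hB; simp [trace_smul] at hB; linear_combination hB/2
    rw [hν] at n1
    obtain ⟨Q, d, q1, q2, q3⟩ := traceless_normal (Aᴴ * B) (1/4) (by norm_num) hAB (by
      rw [conjTranspose_mul, conjTranspose_conjTranspose, mul_assoc, ← mul_assoc B, n1]
      simp only [smul_mul_assoc, one_mul, mul_smul_comm, m2', smul_smul]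
      congr 1; push_cast; norm_num)
    have key : A * (Aᴴ * B) = (1/2:ℂ) • B := by rw [← mul_assoc, m1']; simp
    have hB2 : B = (2:ℂ) • (A * (Aᴴ * B)) := by rw [key, smul_smul]; norm_num
    have s2 : (((√2 : ℝ):ℂ))* ((√2 : ℝ):ℂ) = 2 := by
      rw [← Complex.ofReal_mul]; norm_num
    have s0 : ((√2 : ℝ):ℂ) ≠ 0 := by intro h; rw [h] at s2; norm_num at s2
    refine ⟨((√2:ℝ):ℂ) • (A * Q), Qᴴ, fun _ => (((√2:ℝ):ℂ))⁻¹, ((√2:ℝ):ℂ) • d, ?_, by simpa using q1, ?_, ?_⟩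
    · rw [conjTranspose_smul, smul_mul_smul_comm, conjTranspose_mul, mul_assoc, ← mul_assoc Q, q2, one_mul, m1']
      simp only [RCLike.star_def, Complex.conj_ofReal, s2, smul_smul]; norm_num
    · have : diagonal (fun _ : Fin 2 => (((√2:ℝ):ℂ))⁻¹) = (((√2:ℝ):ℂ))⁻¹ • (1:M2) := by
        ext i j; simp [diagonal_apply, one_apply]
      rw [this]
      simp only [mul_smul_comm, mul_one, smul_smul, inv_mul_cancel₀ s0, one_smul, mul_assoc, q2]
    · conv_lhs => rw [hB2, q3]
      rw [diagonal_smul]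
      simp only [smul_mul_assoc, mul_smul_comm, smul_smul, s2, mul_assoc]
  · have c1 : (Lᴴ * A * Rᴴ) * (Lᴴ * A * Rᴴ)ᴴ = diagonal μ := by
      simp only [conjTranspose_mul, conjTranspose_conjTranspose]
      calc _ = Lᴴ * (A * (Rᴴ * R) * Aᴴ) * L := by simp only [mul_assoc]
        _ = _ := by rw [r1, mul_one, m1]; simp only [mul_assoc, l1, mul_one]; rw [← mul_assoc, l1, one_mul]
    have c2 : (Lᴴ * A * Rᴴ)ᴴ * (Lᴴ * A * Rᴴ) = diagonal μ := by
      simp only [conjTranspose_mul, conjTranspose_conjTranspose]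
      calc _ = R * (Aᴴ * (L * Lᴴ) * A) * Rᴴ := by simp only [mul_assoc]
        _ = _ := by rw [l2, mul_one, m2]; simp only [mul_assoc, r2, mul_one]; rw [← mul_assoc, r2, one_mul]
    set ν : Fin 2 → ℂ := fun i => ((c:ℂ) - x * μ i) / y with hν
    have hνd : diagonal ν = (y:ℂ)⁻¹ • ((c:ℂ) • (1:M2) - (x:ℂ) • diagonal μ) := by
      ext i j; fin_cases i <;> fin_cases j <;> simp [hν, div_eq_inv_mul]
    have n1 : B * Bᴴ = L * diagonal ν * Lᴴ := by
      have : (y:ℂ) • (B * Bᴴ) = (c:ℂ) • 1 - (x:ℂ) • (A * Aᴴ) := eq_sub_of_add_eq' h1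
      have h3 : B * Bᴴ = (y:ℂ)⁻¹ • ((c:ℂ) • 1 - (x:ℂ) • (A * Aᴴ)) := by
        rw [← this, smul_smul, inv_mul_cancel₀ hy', one_smul]
      rw [h3, hνd, m1]
      simp only [smul_mul_assoc, mul_smul_comm, mul_sub, sub_mul, mul_one, l2]
    have n2 : Bᴴ * B = Rᴴ * diagonal ν * R := by
      have : (y:ℂ) • (Bᴴ * B) = (c:ℂ) • 1 - (x:ℂ) • (Aᴴ * A) := eq_sub_of_add_eq' h2
      have h3 : Bᴴ * B = (y:ℂ)⁻¹ • ((c:ℂ) • 1 - (x:ℂ) • (Aᴴ * A)) := by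
        rw [← this, smul_smul, inv_mul_cancel₀ hy', one_smul]
      rw [h3, hνd, m2]
      simp only [smul_mul_assoc, mul_smul_comm, mul_sub, sub_mul, mul_one, r1]
    have d1 : (Lᴴ * B * Rᴴ) * (Lᴴ * B * Rᴴ)ᴴ = diagonal ν := by
      simp only [conjTranspose_mul, conjTranspose_conjTranspose]
      calc _ = Lᴴ * (B * (Rᴴ * R) * Bᴴ) * L := by simp only [mul_assoc]
        _ = _ := by rw [r1, mul_one, n1]; simp only [mul_assoc, l1, mul_one]; rw [← mul_assoc, l1, one_mul]
    have d2 : (Lᴴ * B * Rᴴ)ᴴ * (Lᴴ * B * Rᴴ) = diagonal ν := by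
      simp only [conjTranspose_mul, conjTranspose_conjTranspose]
      calc _ = R * (Bᴴ * (L * Lᴴ) * B) * Rᴴ := by simp only [mul_assoc]
        _ = _ := by rw [l2, mul_one, n2]; simp only [mul_assoc, r2, mul_one]; rw [← mul_assoc, r2, one_mul]
    have hν01 : ν 0 ≠ ν 1 := by
      intro h
      simp only [hν] at h
      rw [div_left_inj' hy'] at h
      exact hμ (mul_left_cancel₀ hx' (by linear_combination -h))
    have eA := diag_of_comm (Lᴴ * A * Rᴴ) μ hμ (by
      conv_lhs => rw [← c2]
      rw [← mul_assoc, c1])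
    have eB := diag_of_comm (Lᴴ * B * Rᴴ) ν hν01 (by
      conv_lhs => rw [← d2]
      rw [← mul_assoc, d1])
    refine ⟨L, R, fun i => (Lᴴ * A * Rᴴ) i i, fun i => (Lᴴ * B * Rᴴ) i i, l2, r2, ?_, ?_⟩
    · rw [← eA]
      calc A = (L * Lᴴ) * A * (Rᴴ * R) := by rw [l2, r1, one_mul, mul_one]
        _ = _ := by simp only [mul_assoc]
    · rw [← eB]
      calc B = (L * Lᴴ) * B * (Rᴴ * R) := by rw [l2, r1, one_mul, mul_one]
        _ = _ := by simp only [mul_assoc]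

lemma sq2 : (((√2 : ℝ):ℂ))* ((√2 : ℝ):ℂ) = 2 := by
  rw [← Complex.ofReal_mul]; norm_num

lemma sq2_ne : ((√2 : ℝ):ℂ) ≠ 0 := by
  intro h; have := sq2; rw [h] at this; norm_num at this

lemma core_one (W : Fin 2 → M2) (lam : Fin 2 → ℝ) (c : ℝ) (i0 : Fin 2) (h0 : lam i0 ≠ 0)
    (h0' : ∀ i, i ≠ i0 → lam i = 0)
    (horth : ∀ i j, ((W i)ᴴ * W j).trace = if i = j then 1 else 0)
    (h1 : ∑ i, (lam i : ℂ) • (W i * (W i)ᴴ) = (c : ℂ) • 1) :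
    ∃ L R g : M2, L * Lᴴ = 1 ∧ R * Rᴴ = 1 ∧ g * gᴴ = 1 ∧
      ∀ i, lam i ≠ 0 → W i = L * diagonal (g i) * R := by
  have h0c : (lam i0 : ℂ) ≠ 0 := by exact_mod_cast h0
  rw [Finset.sum_eq_single i0 (by intro i _ hi; simp [h0' i hi]) (by simp)] at h1
  have e1 : W i0 * (W i0)ᴴ = ((lam i0 : ℂ)⁻¹ * c) • 1 := by
    rw [mul_smul, ← h1, smul_smul, inv_mul_cancel₀ h0c, one_smul]
  have e2 : (lam i0 : ℂ)⁻¹ * c = 1/2 := by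
    have := horth i0 i0
    rw [trace_mul_comm, e1] at this; simp [trace_smul] at this; linear_combination this/2
  rw [e2] at e1
  refine ⟨((√2:ℝ):ℂ) • W i0, 1, of fun i j => if i = i0 then ((√2:ℝ):ℂ)⁻¹ else
    if j = 0 then ((√2:ℝ):ℂ)⁻¹ else -((√2:ℝ):ℂ)⁻¹, ?_, by simp, ?_, ?_⟩
  · rw [conjTranspose_smul, smul_mul_smul_comm, e1]
    simp only [RCLike.star_def, Complex.conj_ofReal, sq2, smul_smul]; norm_num
  · have hh : ((√2:ℝ):ℂ)⁻¹ * ((√2:ℝ):ℂ)⁻¹ = 1/2 := by rw [← mul_inv, sq2]; norm_num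
    have hs : (starRingEnd ℂ) (((√2:ℝ):ℂ)⁻¹) = ((√2:ℝ):ℂ)⁻¹ := by simp
    generalize ((√2:ℝ):ℂ)⁻¹ = r at *
    ext i j
    fin_cases i0 <;> fin_cases i <;> fin_cases j <;>
      simp [mul_apply, hs, hh] <;> norm_num
  · intro i hi
    have : i = i0 := by by_contra h; exact hi (h0' i h)
    subst this
    have : diagonal (fun _ : Fin 2 => (((√2:ℝ):ℂ))⁻¹) = (((√2:ℝ):ℂ))⁻¹ • (1:M2) := by
      ext i j; simp [diagonal_apply, one_apply]
    change W i = _ * diagonal (fun j => if i = i then _ else _) * _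
    simp only [if_true, this, mul_one, mul_smul_comm, smul_smul, inv_mul_cancel₀ sq2_ne, one_smul]

lemma core_s14 (W : Fin 2 → M2) (lam : Fin 2 → ℝ) (c : ℝ) (hc : c ≠ 0)
    (horth : ∀ i j, ((W i)ᴴ * W j).trace = if i = j then 1 else 0)
    (h1 : ∑ i, (lam i : ℂ) • (W i * (W i)ᴴ) = (c : ℂ) • 1)
    (h2 : ∑ i, (lam i : ℂ) • ((W i)ᴴ * W i) = (c : ℂ) • 1) :
    ∃ L R g : M2, L * Lᴴ = 1 ∧ R * Rᴴ = 1 ∧ g * gᴴ = 1 ∧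
      ∀ i, lam i ≠ 0 → W i = L * diagonal (g i) * R := by
  by_cases z0 : lam 0 = 0
  · by_cases z1 : lam 1 = 0
    · exfalso
      have := congrFun (congrFun h1 0) 0
      simp [z0, z1] at this
      exact hc (by exact_mod_cast this.symm)
    · exact core_one W lam c 1 z1 (by intro i hi; fin_cases i <;> simp_all) horth h1
  by_cases z1 : lam 1 = 0
  · exact core_one W lam c 0 z0 (by intro i hi; fin_cases i <;> simp_all) horth h1
  obtain ⟨L, R, d, e, hL, hR, hA, hB⟩ := simdiag (W 0) (W 1) (lam 0) (lam 1) c z0 z1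
    (by simpa using horth 0 0) (by simpa using horth 1 1) (by simpa using horth 0 1)
    (by simpa using h1) (by simpa using h2)
  have hL' := mul_eq_one_comm.1 hL
  have hW : ∀ i, W i = L * diagonal (![d, e] i) * R := by
    intro i; fin_cases i
    · simpa using hA
    · simpa using hB
  refine ⟨L, R, of ![d, e], hL, hR, ?_, fun i _ => hW i⟩
  ext i j
  have := horth j i
  rw [hW i, hW j] at this
  simp only [conjTranspose_mul] at this
  have e3 : Rᴴ * ((diagonal (![d, e] j))ᴴ * Lᴴ) * (L * diagonal (![d, e] i) * R)
     = Rᴴ * ((diagonal (![d, e] j))ᴴ * diagonal (![d, e] i) * R) := by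
    simp only [mul_assoc]; rw [← mul_assoc Lᴴ, hL', one_mul]
  rw [e3, trace_mul_comm, mul_assoc, hR, mul_one] at this
  rw [one_apply]
  simp only [eq_comm (a := i)]
  rw [← this, mul_apply, diagonal_conjTranspose, diagonal_mul_diagonal, trace_diagonal]
  exact Finset.sum_congr rfl (fun _ _ => by simp [mul_comm])

def slB (V : Matrix (Fin 2 × Fin 2) (Fin 2) ℂ) (b : Fin 2) : M2 := fun a p => V (a, b) p
def slA (V : Matrix (Fin 2 × Fin 2) (Fin 2) ℂ) (a : Fin 2) : M2 := fun b p => V (a, b) p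

lemma loc (V : Matrix (Fin 2 × Fin 2) (Fin 2) ℂ) (hV : Vᴴ * V = 1) (ρ : M2) (hρ : ρ.IsHermitian)
    (c : ℝ) (hc : c ≠ 0)
    (h1 : ∑ b, slB V b * ρ * (slB V b)ᴴ = (c:ℂ) • 1)
    (h2 : ∑ a, slA V a * ρ * (slA V a)ᴴ = (c:ℂ) • 1) :
    ∃ L R u : M2, L * Lᴴ = 1 ∧ R * Rᴴ = 1 ∧ u * uᴴ = 1 ∧
      (V - of (fun (ab : Fin 2 × Fin 2) p => ∑ i, L ab.1 i * R i ab.2 * star (u p i))) * ρ = 0 := by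
  obtain ⟨U, u1, u2, u3⟩ := herm_diag ρ hρ
  set lam := hρ.eigenvalues
  set W : Fin 2 → M2 := fun i => of fun a b => (V * U) (a, b) i with hW
  have hY : (V * U)ᴴ * (V * U) = 1 := by
    rw [conjTranspose_mul, Matrix.mul_assoc, ← Matrix.mul_assoc Vᴴ, hV, Matrix.one_mul, u1]
  obtain ⟨L, R, g, hL, hR, hg, hWg⟩ := core_s14 W lam c hc (by
      intro i j
      have := congrFun (congrFun hY i) j
      rw [one_apply] at this
      rw [← this]
      simp [trace, mul_apply, Fintype.sum_prod_type, hW]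
      ring)
    (by
      rw [← h1]
      have : ∀ b, slB V b * ρ * (slB V b)ᴴ = (slB V b * U) * diagonal (fun i => (lam i : ℂ)) * (slB V b * U)ᴴ := by
        intro b; conv_lhs => rw [u3]
        rw [conjTranspose_mul]; simp only [mul_assoc]
      simp only [this]
      have e : ∀ b, slB V b * U = of fun a i => W i a b := by
        intro b; ext a i; simp [slB, hW, mul_apply]
      simp only [e]
      ext s t
      simp [Matrix.sum_apply, Matrix.add_apply, Matrix.smul_apply, mul_apply, Fin.sum_univ_two, diagonal_apply]
      ring)
    (by
      have h2' := congrArg transpose h2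
      rw [transpose_smul, transpose_one] at h2'
      rw [← h2']
      have : ∀ b, slA V b * ρ * (slA V b)ᴴ = (slA V b * U) * diagonal (fun i => (lam i : ℂ)) * (slA V b * U)ᴴ := by
        intro b; conv_lhs => rw [u3]
        rw [conjTranspose_mul]; simp only [mul_assoc]
      simp only [this]
      have e : ∀ a, slA V a * U = of fun b i => W i a b := by
        intro a; ext b i; simp [slA, hW, mul_apply]
      simp only [e]
      ext s t
      simp [Matrix.sum_apply, Matrix.add_apply, Matrix.smul_apply, mul_apply, Fin.sum_univ_two, diagonal_apply]
      ring)
  refine ⟨L, R, U * gᴴᵀ, hL, hR, ?_, ?_⟩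
  · have : gᴴᵀ * gᴴᵀᴴ = 1 := by
      have := congrArg transpose hg
      rw [transpose_mul, transpose_one] at this
      rw [← this]; congr 1; ext; simp
    rw [conjTranspose_mul, mul_assoc, ← mul_assoc gᴴᵀ, this, one_mul, u2]
  · set Wm : Matrix (Fin 2 × Fin 2) (Fin 2) ℂ := of fun ab i => (L * diagonal (g i) * R) ab.1 ab.2 with hWm
    have e1 : of (fun (ab : Fin 2 × Fin 2) p => ∑ i, L ab.1 i * R i ab.2 * star ((U * gᴴᵀ) p i)) = Wm * Uᴴ := by
      ext ⟨a, b⟩ p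
      simp [hWm, mul_apply, Fin.sum_univ_two, diagonal_apply]
      ring
    have e2 : V = (V * U) * Uᴴ := by rw [Matrix.mul_assoc, u2, Matrix.mul_one]
    rw [e1]
    conv_lhs => rw [e2, u3]
    rw [← Matrix.sub_mul]
    have e3 : (V * U - Wm) * diagonal (fun i => (lam i : ℂ)) = 0 := by
      ext ⟨a, b⟩ i
      rw [mul_diagonal]
      by_cases hi : lam i = 0
      · simp [hi]
      · have := congrFun (congrFun (hWg i hi) a) b
        simp only [hW, of_apply] at this
        simp only [Matrix.sub_apply, hWm, of_apply, this]; simp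
    calc _ = (V * U - Wm) * (Uᴴ * U) * diagonal (fun i => (lam i : ℂ)) * Uᴴ := by simp only [Matrix.mul_assoc]
      _ = 0 := by rw [u1, Matrix.mul_one, e3, Matrix.zero_mul]

open Function in
lemma upd_sum {N : ℕ} (k : Fin N) (g : (Fin N → Fin 2) → ℂ) :
    ∑ x, ∑ p, g (update x k p) = 2 * ∑ x, g x := by
  have hinv : Involutive (fun z : (Fin N → Fin 2) × Fin 2 => (update z.1 k z.2, z.1 k)) := by
    intro z; simp
  have := Equiv.sum_comp hinv.toPerm (fun z : (Fin N → Fin 2) × Fin 2 => g z.1)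
  rw [Fintype.sum_prod_type, Fintype.sum_prod_type] at this
  simp only [Involutive.coe_toPerm] at this
  rw [this]
  simp [Finset.mul_sum]

open Function in
lemma collapse {N : ℕ} (k : Fin N) (x : Fin N → Fin 2) (h : (Fin N → Fin 2) → ℂ)
    (f : Fin N → Fin 2 → Fin 2 → ℂ) (hf : ∀ j, j ≠ k → ∀ p q, f j p q = if p = q then 1 else 0) :
    ∑ x', h x' * ∏ j, f j (x j) (x' j) = ∑ q, h (update x k q) * f k (x k) q := by
  symm
  apply Finset.sum_of_injOn (fun q => update x k q)
  · intro p _ q _ hpq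
    simpa using congrFun hpq k
  · intro p _; simp
  · intro x' _ hx'
    have : ∃ j, j ≠ k ∧ x j ≠ x' j := by
      by_contra! hcon
      apply hx'
      refine ⟨x' k, by simp, ?_⟩
      funext j
      by_cases hj : j = k
      · subst hj; simp
      · simp [hj, hcon j hj]
    obtain ⟨j, hj, hne⟩ := this
    rw [Finset.prod_eq_zero (Finset.mem_univ j), mul_zero]
    rw [hf j hj, if_neg hne]
  · intro q _
    congr 1
    rw [Finset.prod_eq_single k]
    · simp
    · intro j _ hj; simp [hj, hf j hj]
    · simp

open Function in
lemma replace_aux {N : ℕ} (ψ : (Fin N → Fin 2) → ℂ) (w w' : Fin N → Fin 2 → ℂ)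
    (h : ∀ k x, ∑ p, (w k p - w' k p) * ψ (update x k p) = 0) :
    ∑ x, (∏ k, w k (x k)) * ψ x = ∑ x, (∏ k, w' k (x k)) * ψ x := by
  have key : ∀ S : Finset (Fin N),
      ∑ x, (∏ k, (if k ∈ S then w' k (x k) else w k (x k))) * ψ x = ∑ x, (∏ k, w k (x k)) * ψ x := by
    intro S
    induction S using Finset.induction_on with
    | empty => simp
    | insert k S hk ih =>
      rw [← ih, ← sub_eq_zero, ← Finset.sum_sub_distrib]
      have e : ∀ x : Fin N → Fin 2,
          (∏ j, (if j ∈ insert k S then w' j (x j) else w j (x j))) * ψ x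
           - (∏ j, (if j ∈ S then w' j (x j) else w j (x j))) * ψ x
          = -(∏ j ∈ Finset.univ.erase k, (if j ∈ S then w' j (x j) else w j (x j))) *
             ((w k (x k) - w' k (x k)) * ψ x) := by
        intro x
        rw [← Finset.mul_prod_erase _ _ (Finset.mem_univ k), ← Finset.mul_prod_erase _ (fun j => if j ∈ S then w' j (x j) else w j (x j)) (Finset.mem_univ k)]
        have : ∏ j ∈ Finset.univ.erase k, (if j ∈ insert k S then w' j (x j) else w j (x j))
          = ∏ j ∈ Finset.univ.erase k, (if j ∈ S then w' j (x j) else w j (x j)) := by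
          apply Finset.prod_congr rfl
          intro j hj
          simp [(Finset.mem_erase.1 hj).1]
        rw [this]
        simp only [Finset.mem_insert_self, if_true, hk, if_false]
        ring
      simp only [e]
      have h2 := upd_sum k (fun x => -(∏ j ∈ Finset.univ.erase k, (if j ∈ S then w' j (x j) else w j (x j))) *
             ((w k (x k) - w' k (x k)) * ψ x))
      have h3 : ∑ x : Fin N → Fin 2, ∑ p, -(∏ j ∈ Finset.univ.erase k, (if j ∈ S then w' j (update x k p j) else w j (update x k p j))) *
             ((w k (update x k p k) - w' k (update x k p k)) * ψ (update x k p)) = 0 := by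
        apply Finset.sum_eq_zero
        intro x _
        have : ∀ p, ∏ j ∈ Finset.univ.erase k, (if j ∈ S then w' j (update x k p j) else w j (update x k p j))
          = ∏ j ∈ Finset.univ.erase k, (if j ∈ S then w' j (x j) else w j (x j)) := by
          intro p
          apply Finset.prod_congr rfl
          intro j hj
          rw [update_of_ne (Finset.mem_erase.1 hj).1]
        simp only [this, update_self, ← Finset.mul_sum, h k x, mul_zero]
      rw [h3] at h2
      simpa using h2.symm
  have := key Finset.univ
  simpa using this.symm

lemma sum_sum_prod {N : ℕ} (g : Fin N → Fin 2 → Fin 2 → ℂ) :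
    ∑ a : Fin N → Fin 2, ∑ b : Fin N → Fin 2, ∏ j, g j (a j) (b j) = ∏ j, ∑ a, ∑ b, g j a b := by
  rw [Finset.prod_univ_sum]
  simp only [Fintype.piFinset_univ]
  apply Finset.sum_congr rfl
  intro a _
  rw [Finset.prod_univ_sum]
  simp only [Fintype.piFinset_univ]

def PhiM {N : ℕ} (V : Fin N → Matrix (Fin 2 × Fin 2) (Fin 2) ℂ) (ψ : (Fin N → Fin 2) → ℂ) :
    Matrix (Fin N → Fin 2) (Fin N → Fin 2) ℂ :=
  of fun a b => ∑ x, (∏ k, V k (a k, b k) (x k)) * ψ x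

def rho {N : ℕ} (ψ : (Fin N → Fin 2) → ℂ) (k : Fin N) : M2 :=
  of fun s t => ∑ x, ψ (Function.update x k s) * (starRingEnd ℂ) (ψ (Function.update x k t))

lemma rho_herm {N : ℕ} (ψ : (Fin N → Fin 2) → ℂ) (k : Fin N) : (rho ψ k).IsHermitian := by
  ext i j
  simp [rho, mul_comm]

open Function in
lemma marg {N : ℕ} (V : Fin N → Matrix (Fin 2 × Fin 2) (Fin 2) ℂ) (ψ : (Fin N → Fin 2) → ℂ)
    (hV : ∀ k, (V k)ᴴ * V k = 1) (h : PhiM V ψ * (PhiM V ψ)ᴴ = ((2:ℂ)^N)⁻¹ • 1) (k : Fin N) :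
    ∑ b, slB (V k) b * rho ψ k * (slB (V k) b)ᴴ = ((1:ℝ):ℂ) • 1 := by
  ext s t
  have e1 : ∑ a : Fin N → Fin 2, (PhiM V ψ * (PhiM V ψ)ᴴ) (update a k s) (update a k t) = if s = t then 1 else 0 := by
    rw [h]
    have : ∀ a : Fin N → Fin 2, (update a k s = update a k t) ↔ s = t :=
      fun a => (update_injective a k).eq_iff
    simp only [Matrix.smul_apply, one_apply, this]
    split_ifs <;> simp
  let f : Fin N → Fin 2 → Fin 2 → ℂ := fun j p q => ∑ a, ∑ b,
    V j (if j = k then s else a, b) p * (starRingEnd ℂ) (V j (if j = k then t else a, b) q)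
  have hupd : ∀ (a : Fin N → Fin 2) s j, update a k s j = if j = k then s else a j := by
    intro a s j; rw [update_apply]
  have e2 : ∑ a : Fin N → Fin 2, (PhiM V ψ * (PhiM V ψ)ᴴ) (update a k s) (update a k t)
     = ∑ x, ∑ x', (ψ x * (starRingEnd ℂ) (ψ x')) * ∏ j, f j (x j) (x' j) := by
    have : ∀ x x' : Fin N → Fin 2, ∏ j, f j (x j) (x' j) = ∑ a : Fin N → Fin 2, ∑ b : Fin N → Fin 2, ∏ j,
        (V j (update a k s j, b j) (x j) * (starRingEnd ℂ) (V j (update a k t j, b j) (x' j))) := by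
      intro x x'
      simp only [hupd]
      rw [sum_sum_prod (fun j a b => V j (if j = k then s else a, b) (x j) * (starRingEnd ℂ) (V j (if j = k then t else a, b) (x' j)))]
    simp only [this]
    simp only [mul_apply, conjTranspose_apply, PhiM, of_apply, star_sum, Finset.sum_mul_sum]
    conv_rhs => simp only [Finset.mul_sum]
    have comm : ∀ F : (Fin N → Fin 2) → (Fin N → Fin 2) → (Fin N → Fin 2) → (Fin N → Fin 2) → ℂ,
        ∑ a, ∑ b, ∑ x, ∑ x', F a b x x' = ∑ x, ∑ x', ∑ a, ∑ b, F a b x x' := by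
      intro F
      calc _ = ∑ a, ∑ x, ∑ b, ∑ x', F a b x x' := by
            refine Finset.sum_congr rfl fun a _ => Finset.sum_comm
        _ = ∑ x, ∑ a, ∑ b, ∑ x', F a b x x' := Finset.sum_comm
        _ = ∑ x, ∑ a, ∑ x', ∑ b, F a b x x' := by
            refine Finset.sum_congr rfl fun x _ => Finset.sum_congr rfl fun a _ => Finset.sum_comm
        _ = _ := by refine Finset.sum_congr rfl fun x _ => Finset.sum_comm
    rw [comm]
    refine Finset.sum_congr rfl fun x _ => Finset.sum_congr rfl fun x' _ =>
      Finset.sum_congr rfl fun a _ => Finset.sum_congr rfl fun b _ => ?_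
    rw [Finset.prod_mul_distrib]
    simp only [star_mul', RCLike.star_def, map_prod]
    ring
  have hf : ∀ j, j ≠ k → ∀ p q, f j p q = if p = q then 1 else 0 := by
    intro j hj p q
    have := congrFun (congrFun (hV j) q) p
    rw [mul_apply, Fintype.sum_prod_type, one_apply] at this
    simp only [eq_comm (a := q)] at this
    rw [← this]
    simp [f, hj, mul_comm]
  have hfk : ∀ p q, f k p q = 2 * ∑ b, V k (s, b) p * (starRingEnd ℂ) (V k (t, b) q) := by
    intro p q; simp [f]; ring
  rw [e2] at e1
  simp only [collapse k _ _ f hf] at e1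
  have h4 := upd_sum k (fun x => ∑ q, ψ x * (starRingEnd ℂ) (ψ (update x k q)) *  ∑ b, V k (s, b) (x k) * (starRingEnd ℂ) (V k (t, b) q))
  have h5 : (2:ℂ) * ∑ x : Fin N → Fin 2, (∑ q, ψ x * (starRingEnd ℂ) (ψ (update x k q)) *  ∑ b, V k (s, b) (x k) * (starRingEnd ℂ) (V k (t, b) q))
      = if s = t then 1 else 0 := by
    rw [← e1]
    simp only [hfk, Finset.mul_sum]
    refine Finset.sum_congr rfl fun x _ => Finset.sum_congr rfl fun q _ => Finset.sum_congr rfl fun b _ => ?_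
    ring
  rw [h5] at h4
  simp only [update_self, update_idem] at h4
  rw [Complex.ofReal_one, one_smul, one_apply, ← h4]
  simp only [Matrix.sum_apply, mul_apply, conjTranspose_apply, rho, of_apply, slB, Fin.sum_univ_two, Finset.sum_mul, Finset.mul_sum, ← Finset.sum_add_distrib]
  refine Finset.sum_congr rfl fun x _ => ?_
  simp only [RCLike.star_def]
  ring

def tens {N : ℕ} (A : Fin N → M2) : Matrix (Fin N → Fin 2) (Fin N → Fin 2) ℂ :=
  of fun x y => ∏ k, A k (x k) (y k)

lemma tens_mul {N : ℕ} (A B : Fin N → M2) : tens A * tens B = tens (fun k => A k * B k) := by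
  ext x y
  simp only [tens, mul_apply, of_apply, ← Finset.prod_mul_distrib]
  rw [Finset.prod_univ_sum]
  simp only [Fintype.piFinset_univ]

lemma tens_one {N : ℕ} : tens (fun _ : Fin N => (1 : M2)) = 1 := by
  ext x y
  simp only [tens, of_apply, one_apply]
  by_cases h : x = y
  · simp [h]
  · rw [if_neg h]
    obtain ⟨j, hj⟩ := Function.ne_iff.1 h
    exact Finset.prod_eq_zero (Finset.mem_univ j) (by simp [hj])

lemma tens_conj {N : ℕ} (A : Fin N → M2) : (tens A)ᴴ = tens (fun k => (A k)ᴴ) := by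
  ext x y
  simp [tens]

lemma tens_unit {N : ℕ} (A : Fin N → M2) (h : ∀ k, A k * (A k)ᴴ = 1) : tens A * (tens A)ᴴ = 1 := by
  rw [tens_conj, tens_mul]
  simp only [h, tens_one]

open Function in
lemma kill {N : ℕ} (ψ : (Fin N → Fin 2) → ℂ) (k : Fin N) (D : Matrix (Fin 2 × Fin 2) (Fin 2) ℂ)
    (h : D * rho ψ k = 0) (ab : Fin 2 × Fin 2) (x : Fin N → Fin 2) :
    ∑ p, D ab p * ψ (update x k p) = 0 := by
  have h1 : (D * rho ψ k * Dᴴ) ab ab = 0 := by rw [h]; simp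
  have h2 : (D * rho ψ k * Dᴴ) ab ab =
      ∑ x, (∑ p, D ab p * ψ (update x k p)) * (starRingEnd ℂ) (∑ p, D ab p * ψ (update x k p)) := by
    simp only [mul_apply, conjTranspose_apply, rho, of_apply, Fin.sum_univ_two, Finset.sum_mul, Finset.mul_sum, ← Finset.sum_add_distrib]
    refine Finset.sum_congr rfl fun x _ => ?_
    simp only [RCLike.star_def, map_add, map_mul]
    ring
  rw [h2] at h1
  simp only [Complex.mul_conj'] at h1
  have h3 : ∑ x, ‖∑ p, D ab p * ψ (update x k p)‖^2 = 0 := by exact_mod_cast h1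
  rw [Finset.sum_eq_zero_iff_of_nonneg (fun _ _ => by positivity)] at h3
  simpa using h3 x (Finset.mem_univ x)

/-- Every `N`-qubit `(2,2)`-locally maximally entanglable state is
local-unitary equivalent to a phase state
`2^{-N/2} Σ_i e^{iθ_i} |i_1 … i_N⟩`. -/
theorem stmt_14 (N : ℕ) (hN : 1 ≤ N) (ψ : (Fin N → Fin 2) → ℂ)
    (hnorm : ∑ x, (starRingEnd ℂ) (ψ x) * ψ x = 1)
    (hLME : ∃ V : Fin N → Matrix (Fin 2 × Fin 2) (Fin 2) ℂ,
      (∀ k, (V k)ᴴ * V k = 1) ∧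
      ∀ a a' : Fin N → Fin 2,
        (∑ bb : Fin N → Fin 2,
          (∑ x, (∏ k, V k (a k, bb k) (x k)) * ψ x) *
            (starRingEnd ℂ) (∑ x, (∏ k, V k (a' k, bb k) (x k)) * ψ x)) =
          if a = a' then ((2 : ℂ) ^ N)⁻¹ else 0) :
    ∃ u : Fin N → Matrix (Fin 2) (Fin 2) ℂ,
      (∀ k, u k ∈ Matrix.unitaryGroup (Fin 2) ℂ) ∧
      ∃ θ : (Fin N → Fin 2) → ℝ,
        ∀ x : Fin N → Fin 2,
          ψ x = ∑ y : Fin N → Fin 2,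
            (∏ k, u k (x k) (y k)) *
              (((Real.sqrt (2 ^ N) : ℝ) : ℂ))⁻¹ * Complex.exp (θ y * Complex.I) := by
  obtain ⟨V, hV, hPhi⟩ := hLME
  have hK : ((2:ℂ)^N) ≠ 0 := pow_ne_zero _ two_ne_zero
  have hA : PhiM V ψ * (PhiM V ψ)ᴴ = ((2:ℂ)^N)⁻¹ • 1 := by
    ext a a'
    rw [mul_apply, Matrix.smul_apply, one_apply]
    simpa [PhiM] using hPhi a a'
  have hB : (PhiM V ψ)ᴴ * PhiM V ψ = ((2:ℂ)^N)⁻¹ • 1 := by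
    have e1 : PhiM V ψ * (((2:ℂ)^N) • (PhiM V ψ)ᴴ) = 1 := by
      rw [mul_smul_comm, hA, smul_smul, mul_inv_cancel₀ hK, one_smul]
    have e2 := mul_eq_one_comm.1 e1
    rw [← e2, smul_mul_assoc, smul_smul, inv_mul_cancel₀ hK, one_smul]
  let V' : Fin N → Matrix (Fin 2 × Fin 2) (Fin 2) ℂ := fun k => of fun ba p => V k (ba.2, ba.1) p
  have hV' : ∀ k, (V' k)ᴴ * V' k = 1 := by
    intro k
    rw [← hV k]
    ext i j
    simp only [mul_apply, conjTranspose_apply, Fintype.sum_prod_type, V', of_apply]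
    rw [Finset.sum_comm]
  have hPV' : PhiM V' ψ = (PhiM V ψ)ᵀ := by
    ext a b; simp [PhiM, V']
  have hA' : PhiM V' ψ * (PhiM V' ψ)ᴴ = ((2:ℂ)^N)⁻¹ • 1 := by
    have := congrArg transpose hB
    rw [transpose_mul, transpose_smul, transpose_one] at this
    rw [hPV', ← this]; rfl
  have hloc := fun k => loc (V k) (hV k) (rho ψ k) (rho_herm ψ k) 1 one_ne_zero
    (marg V ψ hV hA k) (marg V' ψ hV' hA' k)
  choose L R u hL hR hu hD using hloc
  set φ : (Fin N → Fin 2) → ℂ := (tens u)ᴴ *ᵥ ψ with hφ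
  have hψ : ψ = tens u *ᵥ φ := by
    rw [hφ, mulVec_mulVec, tens_unit u hu, one_mulVec]
  have hfac : PhiM V ψ = tens L * diagonal φ * tens R := by
    ext a b
    have e1 : PhiM V ψ a b = ∑ x, (∏ k, ∑ i, L k (a k) i * R k i (b k) * star (u k (x k) i)) * ψ x := by
      simp only [PhiM, of_apply]
      apply replace_aux ψ (fun k p => V k (a k, b k) p)
        (fun k p => ∑ i, L k (a k) i * R k i (b k) * star (u k p i))
      intro k x
      exact kill ψ k _ (hD k) (a k, b k) x
    rw [e1, mul_apply]
    simp only [mul_diagonal, tens, of_apply, hφ, mulVec, dotProduct, conjTranspose_apply, Finset.mul_sum, Finset.sum_mul, Finset.prod_univ_sum, Fintype.piFinset_univ]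
    rw [Finset.sum_comm]
    refine Finset.sum_congr rfl fun i _ => Finset.sum_congr rfl fun x _ => ?_
    simp only [Finset.prod_mul_distrib, star_prod]
    ring
  have hTL := tens_unit L hL
  have hTL' := mul_eq_one_comm.1 hTL
  have hTR := tens_unit R hR
  have hdiag : diagonal φ * (diagonal φ)ᴴ = ((2:ℂ)^N)⁻¹ • 1 := by
    have e1 : (tens L)ᴴ * (PhiM V ψ * (PhiM V ψ)ᴴ) * tens L = ((2:ℂ)^N)⁻¹ • 1 := by
      rw [hA, mul_smul_comm, smul_mul_assoc, mul_one, hTL']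
    rw [← e1, hfac]
    simp only [conjTranspose_mul]
    calc _ = ((tens L)ᴴ * tens L) * diagonal φ * (tens R * (tens R)ᴴ) * (diagonal φ)ᴴ * ((tens L)ᴴ * tens L) := by
          rw [hTL', hTR, one_mul, mul_one, mul_one]
      _ = _ := by simp only [mul_assoc]
  have hnφ : ∀ y, ‖φ y‖ = (Real.sqrt (2^N))⁻¹ := by
    intro y
    have := congrFun (congrFun hdiag y) y
    simp only [diagonal_conjTranspose, diagonal_mul_diagonal, diagonal_apply_eq, Matrix.smul_apply, one_apply_eq, Pi.star_apply, RCLike.star_def, Complex.mul_conj', smul_eq_mul, mul_one] at this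
    have h2 : ‖φ y‖^2 = ((2:ℝ)^N)⁻¹ := by
      apply Complex.ofReal_injective
      push_cast
      exact this
    rw [← Real.sqrt_inv, ← h2, Real.sqrt_sq (norm_nonneg _)]
  refine ⟨u, fun k => Matrix.mem_unitaryGroup_iff.2 (hu k), fun y => Complex.arg (φ y), fun x => ?_⟩
  conv_lhs => rw [hψ]
  simp only [mulVec, dotProduct, tens, of_apply]
  refine Finset.sum_congr rfl fun y _ => ?_
  conv_lhs => rw [← Complex.norm_mul_exp_arg_mul_I (φ y), hnφ y]
  push_cast
  ring

end
end

section
/- Let N ≥ 2, let U_Z = 𝟙^{⊗N} − 2(|1⟩⟨1|)^{⊗N} on (ℂ²)^{⊗N}, and let X = σ_x be the Pauli-X matrix. Then the Heisenberg-evolved single-site operator U_Z† (X ⊗ 𝟙^{⊗(N−1)}) U_Z does not commute with the single-site operator 𝟙^{⊗(N−1)} ⊗ X on the opposite end of the chain. (Hence U_Z, although translation invariant and of constant operator Schmidt rank, violates the light-cone property of quantum cellular automata at arbitrary distance.) -/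
open Matrix

noncomputable section

/-- The multi-control `Z`-gate `U_Z = 𝟙^{⊗N} − 2(|1⟩⟨1|)^{⊗N}` on `N` qubits. -/
def UZ (N : ℕ) : Matrix (Fin N → Fin 2) (Fin N → Fin 2) ℂ :=
  1 - (2 : ℂ) • Matrix.of (fun i j : Fin N → Fin 2 =>
    if (∀ k, i k = 1) ∧ (∀ k, j k = 1) then 1 else 0)

/-- The Pauli matrix `σ_x` acting on qubit `p` of an `N`-qubit chain, tensored with the
identity on all other qubits. -/
def sigmaXat (N : ℕ) (p : Fin N) : Matrix (Fin N → Fin 2) (Fin N → Fin 2) ℂ :=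
  Matrix.of fun x y =>
    if ∀ k, k ≠ p → x k = y k then (if x p = y p then 0 else 1) else 0

/-- Flip the bit at site `p`. -/
def flipAt {N : ℕ} (p : Fin N) (x : Fin N → Fin 2) : Fin N → Fin 2 :=
  Function.update x p (1 - x p)

/-- The diagonal of `U_Z`. -/
def dZ {N : ℕ} (x : Fin N → Fin 2) : ℂ := if ∀ k, x k = 1 then -1 else 1

theorem UZ_eq (N : ℕ) : UZ N = Matrix.diagonal dZ := by
  ext x y
  by_cases hxy : x = y
  · subst hxy
    by_cases hx : ∀ k, x k = 1
    · simp [UZ, dZ, hx]; norm_num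
    · simp [UZ, dZ, hx]
  · have : ¬ ((∀ k, x k = 1) ∧ (∀ k, y k = 1)) := by
      rintro ⟨h1, h2⟩
      exact hxy (funext fun k => (h1 k).trans (h2 k).symm)
    simp [UZ, hxy, this]

theorem fin2_aux (a b : Fin 2) : a ≠ b ↔ a = 1 - b := by
  revert a b; decide

theorem sigmaXat_apply {N : ℕ} (p : Fin N) (x y : Fin N → Fin 2) :
    sigmaXat N p x y = if x = flipAt p y then 1 else 0 := by
  have key : x = flipAt p y ↔ (∀ k, k ≠ p → x k = y k) ∧ x p ≠ y p := by
    rw [flipAt, Function.eq_update_iff, fin2_aux, and_comm]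
  by_cases h1 : ∀ k, k ≠ p → x k = y k
  · by_cases h2 : x p = y p
    · have : ¬ x = flipAt p y := fun h => (key.1 h).2 h2
      simp only [sigmaXat, Matrix.of_apply, if_pos h1, if_pos h2, if_neg this]
    · have : x = flipAt p y := key.2 ⟨h1, h2⟩
      rw [if_pos this]
      simp only [sigmaXat, Matrix.of_apply, if_pos h1, if_neg h2]
  · have : ¬ x = flipAt p y := fun h => h1 (key.1 h).1
    simp only [sigmaXat, Matrix.of_apply, if_neg h1, if_neg this]

theorem flipAt_flipAt {N : ℕ} (p : Fin N) (x : Fin N → Fin 2) : flipAt p (flipAt p x) = x := by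
  simp [flipAt]

theorem mul_sigma {N : ℕ} (p : Fin N) (M : Matrix (Fin N → Fin 2) (Fin N → Fin 2) ℂ)
    (x y : Fin N → Fin 2) : (M * sigmaXat N p) x y = M x (flipAt p y) := by
  simp [Matrix.mul_apply, sigmaXat_apply]

theorem sigma_mul {N : ℕ} (p : Fin N) (M : Matrix (Fin N → Fin 2) (Fin N → Fin 2) ℂ)
    (x y : Fin N → Fin 2) : (sigmaXat N p * M) x y = M (flipAt p x) y := by
  have h : ∀ z, x = flipAt p z ↔ flipAt p x = z := fun z =>
    ⟨fun h => by rw [h, flipAt_flipAt], fun h => by rw [← h, flipAt_flipAt]⟩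
  simp [Matrix.mul_apply, sigmaXat_apply, h]

theorem dZ_conj {N : ℕ} (x : Fin N → Fin 2) : star (dZ x) = dZ x := by
  unfold dZ; split_ifs <;> simp

theorem evolved_apply {N : ℕ} (p : Fin N) (x y : Fin N → Fin 2) :
    ((UZ N)ᴴ * sigmaXat N p * UZ N) x y
      = dZ x * (if x = flipAt p y then 1 else 0) * dZ y := by
  rw [UZ_eq, Matrix.diagonal_conjTranspose, Matrix.mul_diagonal, Matrix.diagonal_mul,
    sigmaXat_apply, Pi.star_apply, dZ_conj]

theorem dZ_of_zero {N : ℕ} (x : Fin N → Fin 2) (k : Fin N) (h : x k = 0) : dZ x = 1 := by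
  refine if_neg fun h1 => ?_
  have := h1 k
  rw [h] at this
  exact absurd this (by decide)

theorem no_commute {N : ℕ} (p q : Fin N) (hpq : p ≠ q) :
    ((UZ N)ᴴ * sigmaXat N p * UZ N) * sigmaXat N q ≠
      sigmaXat N q * ((UZ N)ᴴ * sigmaXat N p * UZ N) := by
  intro h
  have hcomm := congrFun (congrFun h (fun _ => 1)) (flipAt q (flipAt p (fun _ => 1)))
  rw [mul_sigma, sigma_mul, evolved_apply, evolved_apply, flipAt_flipAt, flipAt_flipAt] at hcomm
  have hc : flipAt q (fun _ => 1) = flipAt p (flipAt q (flipAt p (fun _ => (1 : Fin 2)))) := by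
    funext k
    by_cases h1 : k = p
    · subst h1; simp [flipAt, hpq]
    · by_cases h2 : k = q
      · subst h2; simp [flipAt, h1]
      · simp [flipAt, h1, h2]
  rw [if_pos rfl, if_pos hc] at hcomm
  have e1 : dZ (fun _ : Fin N => (1 : Fin 2)) = -1 := by simp [dZ]
  rw [e1, dZ_of_zero (flipAt p fun _ => 1) p (by simp [flipAt]),
    dZ_of_zero (flipAt q fun _ => 1) q (by simp [flipAt]),
    dZ_of_zero (flipAt q (flipAt p fun _ => 1)) q (by simp [flipAt, hpq.symm])] at hcomm
  norm_num at hcomm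

/-- For every `N ≥ 2`, the Heisenberg-evolved single-site operator
`U_Z† (X ⊗ 𝟙^{⊗(N−1)}) U_Z` does not commute with the single-site operator
`𝟙^{⊗(N−1)} ⊗ X` at the opposite end of the chain: `U_Z` violates the light-cone
property of quantum cellular automata at arbitrary distance. -/
theorem stmt_16 (N : ℕ) (hN : 2 ≤ N) :
    ((UZ N)ᴴ * sigmaXat N ⟨0, by omega⟩ * UZ N) * sigmaXat N ⟨N - 1, by omega⟩ ≠
      sigmaXat N ⟨N - 1, by omega⟩ * ((UZ N)ᴴ * sigmaXat N ⟨0, by omega⟩ * UZ N) := by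
  exact no_commute _ _ (by simp [Fin.ext_iff]; omega)

end
end

section
/- Let A_1, …, A_N be a tensor sequence that generates a matrix-product unitary and is in canonical form, with equal physical input and output dimension d at every site. If for some k < N the set of matrices { X̂ : X ∈ 𝒮^{(k)} } equals the full real vector space of traceless Hermitian D_k × D_k matrices, then D_k = 1. -/
open Matrix Kronecker

noncomputable section

/-- The partial matrix product `A_k^{i_k j_k} ⋯ A_1^{i_1 j_1}` of a tensor sequence
(sites are 0-based: `A m` is the tensor of site `m+1`). -/
def mpoProd (d : ℕ) (D : ℕ → ℕ)
    (A : ∀ k : ℕ, Fin d → Fin d → Matrix (Fin (D (k + 1))) (Fin (D k)) ℂ) :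
    ∀ N : ℕ, (Fin N → Fin d) → (Fin N → Fin d) → Matrix (Fin (D N)) (Fin (D 0)) ℂ
  | 0, _, _ => 1
  | (N + 1), i, j =>
      A N (i (Fin.last N)) (j (Fin.last N)) *
        mpoProd d D A N (fun t => i t.castSucc) (fun t => j t.castSucc)

/-- The matrix-product operator generated by the tensor sequence, acting on `(ℂ^d)^{⊗N}`;
since `D 0 = D N = 1`, the `1 × 1` boundary matrix is identified with a scalar by
summing its entries. -/
def mpoOp (d : ℕ) (D : ℕ → ℕ)
    (A : ∀ k : ℕ, Fin d → Fin d → Matrix (Fin (D (k + 1))) (Fin (D k)) ℂ) (N : ℕ) :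
    Matrix (Fin N → Fin d) (Fin N → Fin d) ℂ :=
  Matrix.of fun i j => ∑ m, ∑ n, mpoProd d D A N i j m n

/-- `∑ i j j', M j' j • conj(A^{i j'}) ⊗ conj?  -- the building block
`Σ_{i,j,j'} (M)_{j'j} · conj(A^{ij'}) ⊗ A^{ij}` (Kronecker product, entrywise conjugate). -/
def Smat {d Dl Dr : ℕ} (A : Fin d → Fin d → Matrix (Fin Dl) (Fin Dr) ℂ)
    (M : Matrix (Fin d) (Fin d) ℂ) : Matrix (Fin Dl × Fin Dl) (Fin Dr × Fin Dr) ℂ :=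
  ∑ i, ∑ j, ∑ j', M j' j • (((A i j').map (starRingEnd ℂ)) ⊗ₖ (A i j))

/-- The transfer matrix `E^{(k+1)} = (1/d) Σ_{i,j} conj(A_k^{ij}) ⊗ A_k^{ij}`. -/
def Esite (d : ℕ) (D : ℕ → ℕ)
    (A : ∀ k : ℕ, Fin d → Fin d → Matrix (Fin (D (k + 1))) (Fin (D k)) ℂ) (k : ℕ) :
    Matrix (Fin (D (k + 1)) × Fin (D (k + 1))) (Fin (D k) × Fin (D k)) ℂ :=
  ((d : ℂ))⁻¹ • Smat (A k) 1

/-- `S_α^{(k+1)}`, where `α = 0` carries the extra `1/d` factor (there `σ 0 = 𝟙`). -/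
def Ssite (d : ℕ) (D : ℕ → ℕ)
    (A : ∀ k : ℕ, Fin d → Fin d → Matrix (Fin (D (k + 1))) (Fin (D k)) ℂ)
    (σ : Fin (d * d) → Matrix (Fin d) (Fin d) ℂ) (k : ℕ) (α : Fin (d * d)) :
    Matrix (Fin (D (k + 1)) × Fin (D (k + 1))) (Fin (D k) × Fin (D k)) ℂ :=
  (if (α : ℕ) = 0 then ((d : ℂ))⁻¹ else 1) • Smat (A k) (σ α)

/-- The product `S_{α_N}^{(N)} ⋯ S_{α_1}^{(1)}`. -/
def Schain (d : ℕ) (D : ℕ → ℕ)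
    (A : ∀ k : ℕ, Fin d → Fin d → Matrix (Fin (D (k + 1))) (Fin (D k)) ℂ)
    (σ : Fin (d * d) → Matrix (Fin d) (Fin d) ℂ) :
    ∀ N : ℕ, (Fin N → Fin (d * d)) →
      Matrix (Fin (D N) × Fin (D N)) (Fin (D 0) × Fin (D 0)) ℂ
  | 0, _ => 1
  | (N + 1), α =>
      Ssite d D A σ N (α (Fin.last N)) * Schain d D A σ N (fun t => α t.castSucc)

/-- `ρ^{(N)} = E^{(N)} ⋯ E^{(1)}`. -/
def rhoChain (d : ℕ) (D : ℕ → ℕ)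
    (A : ∀ k : ℕ, Fin d → Fin d → Matrix (Fin (D (k + 1))) (Fin (D k)) ℂ) :
    ∀ N : ℕ, Matrix (Fin (D N) × Fin (D N)) (Fin (D 0) × Fin (D 0)) ℂ
  | 0 => 1
  | (N + 1) => Esite d D A N * rhoChain d D A N

/-- `𝒮^{(N)}`: the real span of all products `S_{α_N}^{(N)} ⋯ S_{α_1}^{(1)}` with some
`α_t ≠ 0`. -/
def Sspan (d : ℕ) (D : ℕ → ℕ)
    (A : ∀ k : ℕ, Fin d → Fin d → Matrix (Fin (D (k + 1))) (Fin (D k)) ℂ)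
    (σ : Fin (d * d) → Matrix (Fin d) (Fin d) ℂ) (N : ℕ) :
    Submodule ℝ (Matrix (Fin (D N) × Fin (D N)) (Fin (D 0) × Fin (D 0)) ℂ) :=
  Submodule.span ℝ
    {M | ∃ α : Fin N → Fin (d * d), (∃ t, (α t : ℕ) ≠ 0) ∧ M = Schain d D A σ N α}

/-- Identification of a vector in `ℂ^D ⊗ ℂ^D` (here: a `D² × 1` matrix, the column index
ranging over the trivial type `Fin (D 0) × Fin (D 0)` with `D 0 = 1`) with a `D × D`
matrix. -/
def matHat {Dk D0 : ℕ} (M : Matrix (Fin Dk × Fin Dk) (Fin D0 × Fin D0) ℂ) :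
    Matrix (Fin Dk) (Fin Dk) ℂ :=
  Matrix.of fun m n => ∑ q, M (m, n) q

/-- The right part of the matrix product, sites `k+1, …, k+r`. -/
def mpoR (d : ℕ) (D : ℕ → ℕ)
    (A : ∀ k : ℕ, Fin d → Fin d → Matrix (Fin (D (k + 1))) (Fin (D k)) ℂ) (k : ℕ) :
    ∀ r : ℕ, (Fin r → Fin d) → (Fin r → Fin d) → Matrix (Fin (D (k + r))) (Fin (D k)) ℂ
  | 0, _, _ => (1 : Matrix (Fin (D k)) (Fin (D k)) ℂ)
  | (r + 1), i, j =>
      A (k + r) (i (Fin.last r)) (j (Fin.last r)) *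
        mpoR d D A k r (fun t => i t.castSucc) (fun t => j t.castSucc)

theorem mpoProd_split (d : ℕ) (D : ℕ → ℕ)
    (A : ∀ k : ℕ, Fin d → Fin d → Matrix (Fin (D (k + 1))) (Fin (D k)) ℂ) (k r : ℕ)
    (i j : Fin (k + r) → Fin d) :
    mpoProd d D A (k + r) i j =
      mpoR d D A k r (fun t => i (Fin.natAdd k t)) (fun t => j (Fin.natAdd k t)) *
        mpoProd d D A k (fun t => i (Fin.castAdd r t)) (fun t => j (Fin.castAdd r t)) := by
  induction r with
  | zero => exact (Matrix.one_mul _).symm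
  | succ r ih =>
    have h := ih (fun t => i t.castSucc) (fun t => j t.castSucc)
    change A (k + r) _ _ * mpoProd d D A (k + r) _ _ = (A (k + r) _ _ * mpoR d D A k r _ _) * _
    rw [Matrix.mul_assoc]
    exact congrArg (fun Z => A (k + r) (i (Fin.last (k + r))) (j (Fin.last (k + r))) * Z) h

/-- Left operators. -/
def opL (d : ℕ) (D : ℕ → ℕ)
    (A : ∀ k : ℕ, Fin d → Fin d → Matrix (Fin (D (k + 1))) (Fin (D k)) ℂ) (k : ℕ)
    (m : Fin (D k)) : Matrix (Fin k → Fin d) (Fin k → Fin d) ℂ :=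
  Matrix.of fun i j => ∑ n, mpoProd d D A k i j m n

/-- Right operators. -/
def opR (d : ℕ) (D : ℕ → ℕ)
    (A : ∀ k : ℕ, Fin d → Fin d → Matrix (Fin (D (k + 1))) (Fin (D k)) ℂ) (k r : ℕ)
    (n : Fin (D k)) : Matrix (Fin r → Fin d) (Fin r → Fin d) ℂ :=
  Matrix.of fun i j => ∑ m, mpoR d D A k r i j m n

theorem mpoOp_split (d : ℕ) (D : ℕ → ℕ)
    (A : ∀ k : ℕ, Fin d → Fin d → Matrix (Fin (D (k + 1))) (Fin (D k)) ℂ) (k r : ℕ) :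
    (mpoOp d D A (k + r)).submatrix (Fin.appendEquiv k r) (Fin.appendEquiv k r) =
      ∑ m, opL d D A k m ⊗ₖ opR d D A k r m := by
  ext ⟨i1, i2⟩ ⟨j1, j2⟩
  simp only [mpoOp, Matrix.submatrix_apply, Matrix.of_apply, mpoProd_split, Matrix.sum_apply,
    Matrix.kroneckerMap_apply, opL, opR, Matrix.mul_apply, Fin.appendEquiv, Equiv.coe_fn_mk,
    Fin.append_left, Fin.append_right]
  rw [Finset.sum_congr rfl fun _ _ => Finset.sum_comm, Finset.sum_comm]
  refine Finset.sum_congr rfl fun c _ => ?_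
  rw [Finset.sum_mul_sum, Finset.sum_comm]
  refine Finset.sum_congr rfl fun a _ => Finset.sum_congr rfl fun b _ => mul_comm _ _

theorem gram (d : ℕ) (D : ℕ → ℕ)
    (A : ∀ k : ℕ, Fin d → Fin d → Matrix (Fin (D (k + 1))) (Fin (D k)) ℂ) (k r : ℕ)
    (hU : mpoOp d D A (k + r) ∈ Matrix.unitaryGroup (Fin (k + r) → Fin d) ℂ) :
    ∑ m, ∑ n, ((opL d D A k m)ᴴ * opL d D A k n) ⊗ₖ ((opR d D A k r m)ᴴ * opR d D A k r n)
      = 1 := by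
  have h := (Matrix.mem_unitaryGroup_iff').1 hU
  have h2 : ((mpoOp d D A (k + r)).submatrix (Fin.appendEquiv k r) (Fin.appendEquiv k r))ᴴ *
      ((mpoOp d D A (k + r)).submatrix (Fin.appendEquiv k r) (Fin.appendEquiv k r)) = 1 := by
    rw [Matrix.conjTranspose_submatrix, Matrix.submatrix_mul_equiv, ← Matrix.star_eq_conjTranspose,
      h, Matrix.submatrix_one_equiv]
  rw [mpoOp_split, Matrix.conjTranspose_sum, Finset.sum_mul_sum] at h2
  simpa only [Matrix.conjTranspose_kronecker, ← Matrix.mul_kronecker_mul] using h2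

/-- Coefficients of the operator string. -/
def coef (d : ℕ) (σ : Fin (d * d) → Matrix (Fin d) (Fin d) ℂ) (k : ℕ)
    (α : Fin k → Fin (d * d)) (j' j : Fin k → Fin d) : ℂ :=
  ∏ t, ((if (α t : ℕ) = 0 then ((d : ℂ))⁻¹ else 1) * σ (α t) (j' t) (j t))

theorem sum_snoc {d k : ℕ} (f : (Fin (k + 1) → Fin d) → ℂ) :
    ∑ i, f i = ∑ a : Fin d, ∑ i : Fin k → Fin d, f (Fin.snoc (α := fun _ => Fin d) i a) := by
  rw [← (Fin.snocEquiv (fun _ : Fin (k + 1) => Fin d)).sum_comp, Fintype.sum_prod_type]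
  rfl

theorem sum_swap4 {X Y Z W : Type*} [Fintype X] [Fintype Y] [Fintype Z] [Fintype W]
    (f : X → Y → Z → W → ℂ) :
    ∑ a, ∑ b, ∑ c, ∑ e, f a b c e = ∑ c, ∑ e, ∑ a, ∑ b, f a b c e := by
  have h := Finset.sum_comm (s := (Finset.univ : Finset (X × Y)))
    (t := (Finset.univ : Finset (Z × W))) (f := fun x y => f x.1 x.2 y.1 y.2)
  simpa only [Fintype.sum_prod_type] using h

theorem sum_swap5 {X Y V Z W : Type*} [Fintype X] [Fintype Y] [Fintype Z] [Fintype W]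
    [Fintype V] (f : X → Y → V → Z → W → ℂ) :
    ∑ a, ∑ b, ∑ i, ∑ c, ∑ e, f a b i c e = ∑ c, ∑ e, ∑ i, ∑ a, ∑ b, f a b i c e := by
  have h : ∑ x : X × Y, ∑ i, ∑ y : Z × W, f x.1 x.2 i y.1 y.2 =
      ∑ y : Z × W, ∑ i, ∑ x : X × Y, f x.1 x.2 i y.1 y.2 := by
    rw [Finset.sum_comm, Finset.sum_congr rfl fun _ _ => Finset.sum_comm, Finset.sum_comm]
  simpa only [Fintype.sum_prod_type] using h

theorem sum_swap8 {X Y I J : Type*} [Fintype X] [Fintype Y] [Fintype I] [Fintype J]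
    (w : ℂ) (f : X → Y → I → I → I → ℂ) (g : X → Y → J → J → J → ℂ) :
    ∑ a, ∑ b, (w * ∑ i, ∑ j, ∑ j', f a b i j j') * (∑ i, ∑ j, ∑ j', g a b i j j') =
      ∑ i0, ∑ i, ∑ j0, ∑ j, ∑ k0, ∑ k, ∑ a, ∑ b, w * (f a b i0 j0 k0 * g a b i j k) := by
  have h : ∑ x : X × Y × I × I × I × J × J × J,
      w * (f x.1 x.2.1 x.2.2.1 x.2.2.2.1 x.2.2.2.2.1 *
        g x.1 x.2.1 x.2.2.2.2.2.1 x.2.2.2.2.2.2.1 x.2.2.2.2.2.2.2) =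
      ∑ x : I × J × I × J × I × J × X × Y,
      w * (f x.2.2.2.2.2.2.1 x.2.2.2.2.2.2.2 x.1 x.2.2.1 x.2.2.2.2.1 *
        g x.2.2.2.2.2.2.1 x.2.2.2.2.2.2.2 x.2.1 x.2.2.2.1 x.2.2.2.2.2.1) :=
    Fintype.sum_equiv
      { toFun := fun (a, b, i0, j0, k0, i, j, k) => (i0, i, j0, j, k0, k, a, b)
        invFun := fun (i0, i, j0, j, k0, k, a, b) => (a, b, i0, j0, k0, i, j, k)
        left_inv := fun _ => rfl
        right_inv := fun _ => rfl } _ _ (fun _ => rfl)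
  simp only [Fintype.sum_prod_type] at h
  rw [← h]
  simp only [Finset.mul_sum, Finset.sum_mul, mul_assoc]
  refine Finset.sum_congr rfl fun a _ => Finset.sum_congr rfl fun b _ => ?_
  have h' : ∑ x : J × J × J, ∑ y : I × I × I,
      w * (f a b y.1 y.2.1 y.2.2 * g a b x.1 x.2.1 x.2.2) = ∑ y : I × I × I, ∑ x : J × J × J,
      w * (f a b y.1 y.2.1 y.2.2 * g a b x.1 x.2.1 x.2.2) := Finset.sum_comm
  simp only [Fintype.sum_prod_type] at h'
  first | exact h' | rfl

theorem Smat_mul_apply {d Dl Dr : ℕ} (A : Fin d → Fin d → Matrix (Fin Dl) (Fin Dr) ℂ)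
    (M : Matrix (Fin d) (Fin d) ℂ) (m n : Fin Dl) (a b : Fin Dr) :
    Smat A M (m, n) (a, b) =
      ∑ i, ∑ j, ∑ j', M j' j * (star (A i j' m a) * A i j n b) := by
  simp [Smat, Matrix.sum_apply]

theorem Schain_apply (d : ℕ) (D : ℕ → ℕ)
    (A : ∀ k : ℕ, Fin d → Fin d → Matrix (Fin (D (k + 1))) (Fin (D k)) ℂ)
    (σ : Fin (d * d) → Matrix (Fin d) (Fin d) ℂ) (k : ℕ) (α : Fin k → Fin (d * d))
    (m n : Fin (D k)) (p q : Fin (D 0)) :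
    Schain d D A σ k α (m, n) (p, q) =
      ∑ i, ∑ j, ∑ j', coef d σ k α j' j *
        (star (mpoProd d D A k i j' m p) * mpoProd d D A k i j n q) := by
  induction k with
  | zero =>
    simp only [Schain, coef, mpoProd, Matrix.one_apply, Prod.ext_iff]
    by_cases h1 : m = p <;> by_cases h2 : n = q <;> simp [h1, h2]
  | succ k ih =>
    simp only [Schain, Matrix.mul_apply, Ssite, Matrix.smul_apply, Smat_mul_apply,
      Fintype.sum_prod_type, ih, sum_snoc, mpoProd, coef, Fin.prod_univ_castSucc,
      Fin.snoc_last, Fin.snoc_castSucc, smul_eq_mul, star_sum, star_mul']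
    rw [sum_swap8]
    simp only [Finset.sum_mul_sum]
    simp only [Finset.mul_sum]
    repeat refine Finset.sum_congr rfl fun _ _ => ?_
    ring

theorem matHat_Schain (d : ℕ) (D : ℕ → ℕ)
    (A : ∀ k : ℕ, Fin d → Fin d → Matrix (Fin (D (k + 1))) (Fin (D k)) ℂ)
    (σ : Fin (d * d) → Matrix (Fin d) (Fin d) ℂ) (k : ℕ) (α : Fin k → Fin (d * d))
    (m n : Fin (D k)) :
    matHat (Schain d D A σ k α) m n =
      ∑ j, ∑ j', coef d σ k α j' j * ((opL d D A k m)ᴴ * opL d D A k n) j' j := by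
  simp only [matHat, Matrix.of_apply, Fintype.sum_prod_type, Schain_apply, opL, Matrix.mul_apply,
    Matrix.conjTranspose_apply, star_sum, Finset.sum_mul_sum]
  simp only [Finset.mul_sum]
  rw [sum_swap5]

theorem coef_trace (d : ℕ) (σ : Fin (d * d) → Matrix (Fin d) (Fin d) ℂ) (k : ℕ)
    (α : Fin k → Fin (d * d)) (t : Fin k) (ht : (σ (α t)).trace = 0) :
    ∑ j, coef d σ k α j j = 0 := by
  simp only [coef]
  rw [← Fintype.prod_sum (fun t x => (if (α t : ℕ) = 0 then ((d : ℂ))⁻¹ else 1) * σ (α t) x x)]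
  refine Finset.prod_eq_zero (Finset.mem_univ t) ?_
  rw [← Finset.mul_sum]
  exact mul_eq_zero_of_right _ ht

theorem kill_s18 (d : ℕ) (D : ℕ → ℕ)
    (A : ∀ k : ℕ, Fin d → Fin d → Matrix (Fin (D (k + 1))) (Fin (D k)) ℂ)
    (σ : Fin (d * d) → Matrix (Fin d) (Fin d) ℂ)
    (hσtr : ∀ α : Fin (d * d), (α : ℕ) ≠ 0 → (σ α).trace = 0) (k r : ℕ)
    (hU : mpoOp d D A (k + r) ∈ Matrix.unitaryGroup (Fin (k + r) → Fin d) ℂ)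
    (X : Matrix (Fin (D k) × Fin (D k)) (Fin (D 0) × Fin (D 0)) ℂ) (hX : X ∈ Sspan d D A σ k) :
    ∑ m, ∑ n, matHat X m n • ((opR d D A k r m)ᴴ * opR d D A k r n) = 0 := by
  induction hX using Submodule.span_induction with
  | mem X h =>
    obtain ⟨α, ⟨t, ht⟩, rfl⟩ := h
    ext x y
    have hg := gram d D A k r hU
    have hg' : ∀ j j', ∑ m, ∑ n, ((opL d D A k m)ᴴ * opL d D A k n) j' j *
        ((opR d D A k r m)ᴴ * opR d D A k r n) x y =
        (if j' = j then 1 else 0) * (if x = y then 1 else 0) := by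
      intro j j'
      have := congrFun (congrFun hg (j', x)) (j, y)
      simp only [Matrix.sum_apply, Matrix.kroneckerMap_apply] at this
      rw [this]
      simp only [Matrix.one_apply, Prod.ext_iff]
      by_cases h1 : j' = j <;> by_cases h2 : x = y <;> simp [h1, h2]
    simp only [Matrix.sum_apply, Matrix.smul_apply, smul_eq_mul, matHat_Schain, Matrix.zero_apply]
    have key : ∑ j, ∑ j', coef d σ k α j' j * ∑ m, ∑ n,
        ((opL d D A k m)ᴴ * opL d D A k n) j' j *
        ((opR d D A k r m)ᴴ * opR d D A k r n) x y = 0 := by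
      simp only [hg']
      have := coef_trace d σ k α t (hσtr _ ht)
      simp only [ite_mul, one_mul, zero_mul, mul_ite, mul_zero, Finset.sum_ite_eq',
        Finset.sum_ite_eq, Finset.mem_univ, if_true, mul_one, Finset.sum_const_zero]
      split_ifs <;> simp [this]
    rw [← key]
    simp only [Finset.sum_mul, Finset.mul_sum]
    rw [sum_swap4]
    simp only [mul_assoc]
  | zero => simp [matHat]
  | add X Y _ _ hX hY =>
    have : ∀ m n, matHat (X + Y) m n = matHat X m n + matHat Y m n := by
      intro m n; simp [matHat, Finset.sum_add_distrib]
    simp only [this, add_smul, Finset.sum_add_distrib, hX, hY, add_zero]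
  | smul c X _ hX =>
    have : ∀ m n, matHat (c • X) m n = c • matHat X m n := by
      intro m n; simp [matHat, Finset.mul_sum]
    simp only [this, smul_assoc, ← Finset.smul_sum, hX, smul_zero]

/-- For a matrix-product unitary in canonical form (equal physical
input/output dimension `d` at every site): if for some `k < N` the set
`{X̂ : X ∈ 𝒮^{(k)}}` is the full real vector space of traceless Hermitian `D_k × D_k`
matrices, then `D_k = 1` (the MPU factorizes there). -/
theorem stmt_18 (N d : ℕ) (hN : 1 ≤ N) (hd : 2 ≤ d) (D : ℕ → ℕ)
    (hD0 : D 0 = 1) (hDN : D N = 1) (hDpos : ∀ k, k ≤ N → 1 ≤ D k)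
    (A : ∀ k : ℕ, Fin d → Fin d → Matrix (Fin (D (k + 1))) (Fin (D k)) ℂ)
    (σ : Fin (d * d) → Matrix (Fin d) (Fin d) ℂ)
    (hσ0 : ∀ α : Fin (d * d), (α : ℕ) = 0 → σ α = 1)
    (hσherm : ∀ α : Fin (d * d), (α : ℕ) ≠ 0 → (σ α).IsHermitian)
    (hσtr : ∀ α : Fin (d * d), (α : ℕ) ≠ 0 → (σ α).trace = 0)
    (hσorth : ∀ α β : Fin (d * d), (α : ℕ) ≠ 0 → (β : ℕ) ≠ 0 →
      (σ α * σ β).trace = if α = β then 1 else 0)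
    (hσbasis : Submodule.span ℂ (Set.range σ) = ⊤)
    (hU : mpoOp d D A N ∈ Matrix.unitaryGroup (Fin N → Fin d) ℂ)
    (hcan : ∀ k, k < N →
      ((d : ℂ))⁻¹ • ∑ i, ∑ j, (A k i j)ᴴ * (A k i j) = 1) :
    ∀ k, k < N →
      ({M : Matrix (Fin (D k)) (Fin (D k)) ℂ | ∃ X ∈ Sspan d D A σ k, matHat X = M} =
        {M : Matrix (Fin (D k)) (Fin (D k)) ℂ | M.IsHermitian ∧ M.trace = 0}) →
      D k = 1 := by
  intro k hk hset
  obtain ⟨r, rfl⟩ := Nat.exists_eq_add_of_le hk.le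
  by_contra hne
  have hpos := hDpos k hk.le
  have : Nonempty (Fin d) := ⟨⟨0, by omega⟩⟩
  have hall : ∀ M : Matrix (Fin (D k)) (Fin (D k)) ℂ, M.IsHermitian → M.trace = 0 →
      ∑ m, ∑ n, M m n • ((opR d D A k r m)ᴴ * opR d D A k r n) = 0 := by
    intro M h1 h2
    have hM : M ∈ {M : Matrix (Fin (D k)) (Fin (D k)) ℂ | M.IsHermitian ∧ M.trace = 0} := ⟨h1, h2⟩
    rw [← hset] at hM
    obtain ⟨X, hX, rfl⟩ := hM
    exact kill_s18 d D A σ hσtr k r hU X hX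
  have hsingle : ∀ (a b : Fin (D k)) (c : ℂ), ∑ m, ∑ n, (Matrix.single a b c) m n •
      ((opR d D A k r m)ᴴ * opR d D A k r n) = c • ((opR d D A k r a)ᴴ * opR d D A k r b) := by
    intro a b c
    simp [Matrix.single_apply, ite_and, ite_smul]
  have hoff : ∀ a b : Fin (D k), a ≠ b → (opR d D A k r a)ᴴ * opR d D A k r b = 0 := by
    intro a b hab
    have e1 := hall (Matrix.single a b 1 + Matrix.single b a 1)
      (by simp [Matrix.IsHermitian, Matrix.conjTranspose_single, add_comm])
      (by simp [Matrix.trace_single_eq_of_ne, hab, hab.symm])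
    have e2 := hall (Matrix.single a b Complex.I + Matrix.single b a (-Complex.I))
      (by simp [Matrix.IsHermitian, Matrix.conjTranspose_single, add_comm])
      (by simp [Matrix.trace_single_eq_of_ne, hab, hab.symm])
    simp only [Matrix.add_apply, add_smul, Finset.sum_add_distrib, hsingle] at e1 e2
    have e3 : (opR d D A k r a)ᴴ * opR d D A k r b = (opR d D A k r b)ᴴ * opR d D A k r a := by
      rw [neg_smul, ← sub_eq_add_neg, ← smul_sub] at e2
      exact sub_eq_zero.1 ((smul_eq_zero.1 e2).resolve_left Complex.I_ne_zero)
    rw [← e3, one_smul, ← two_smul ℂ] at e1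
    exact (smul_eq_zero.1 e1).resolve_left two_ne_zero
  have hdiag : ∀ a b : Fin (D k),
      (opR d D A k r a)ᴴ * opR d D A k r a = (opR d D A k r b)ᴴ * opR d D A k r b := by
    intro a b
    have e1 := hall (Matrix.single a a 1 + Matrix.single b b (-1))
      (by simp [Matrix.IsHermitian, Matrix.conjTranspose_single])
      (by simp)
    simp only [Matrix.add_apply, add_smul, Finset.sum_add_distrib, hsingle] at e1
    rw [neg_smul, ← sub_eq_add_neg, one_smul, one_smul] at e1
    exact sub_eq_zero.1 e1
  let a : Fin (D k) := ⟨0, by omega⟩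
  let b : Fin (D k) := ⟨1, by omega⟩
  have hab : a ≠ b := by simp [a, b, Fin.ext_iff]
  have hg := gram d D A k r hU
  obtain ⟨j⟩ : Nonempty (Fin k → Fin d) := inferInstance
  obtain ⟨c, hc⟩ : ∃ c : ℂ, c • ((opR d D A k r a)ᴴ * opR d D A k r a) = 1 := by
    refine ⟨∑ m, ((opL d D A k m)ᴴ * opL d D A k m) j j, ?_⟩
    ext x y
    have h := congrFun (congrFun hg (j, x)) (j, y)
    simp only [Matrix.sum_apply, Matrix.kroneckerMap_apply] at h
    rw [Matrix.smul_apply, smul_eq_mul, Finset.sum_mul]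
    have h1 : (1 : Matrix ((Fin k → Fin d) × (Fin r → Fin d)) _ ℂ) (j, x) (j, y) =
      (1 : Matrix (Fin r → Fin d) _ ℂ) x y := by simp [Matrix.one_apply]
    rw [← h1, ← h]
    refine Finset.sum_congr rfl fun m _ => ?_
    rw [Finset.sum_eq_single m]
    · rw [hdiag a m]
    · intro n _ hn
      rw [hoff m n hn.symm]
      simp
    · simp
  have hinv : (c • opR d D A k r a) * (opR d D A k r a)ᴴ = 1 := by
    rw [← Matrix.mul_smul] at hc
    exact mul_eq_one_comm.1 hc
  have hb : opR d D A k r b = 0 := by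
    rw [← Matrix.one_mul (opR d D A k r b), ← hinv, Matrix.mul_assoc, hoff a b hab, Matrix.mul_zero]
  rw [hdiag a b, hb] at hc
  simp at hc

end
end

section
/- Let N ≥ 2 and let V ∈ U(2) be a 2×2 unitary. Define on (ℂ²)^{⊗N} the operator U = 𝟙^{⊗N} + Σ_{i,j ∈ {0,1}} (V_{ij} − δ_{ij}) (|i⟩⟨j|)^{⊗N}, which acts as V on the subspace spanned by |0⟩^{⊗N} and |1⟩^{⊗N} and trivially on its orthogonal complement. Then: (a) U is unitary; (b) U admits the following bond-dimension-5 uniform matrix-product representation: with diagonal 5×5 matrices A^{00} = diag(1,1,0,0,0), A^{11} = diag(1,0,1,0,0), A^{01} = diag(0,0,0,1,0), A^{10} = diag(0,0,0,0,1) and boundary b = diag(1, V_{00}−1, V_{11}−1, V_{01}, V_{10}), one has ⟨i_1 … i_N|U|j_1 … j_N⟩ = Tr(b A^{i_1 j_1} ⋯ A^{i_N j_N}) for all i_k, j_k ∈ {0,1}. -/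
open Matrix

noncomputable section

/-- The operator `U = 𝟙^{⊗N} + Σ_{i,j} (V_{ij} − δ_{ij}) (|i⟩⟨j|)^{⊗N}`, acting as `V`
on `span{|0⟩^{⊗N}, |1⟩^{⊗N}}` and trivially on the orthogonal complement. -/
def Usub (N : ℕ) (V : Matrix (Fin 2) (Fin 2) ℂ) :
    Matrix (Fin N → Fin 2) (Fin N → Fin 2) ℂ :=
  Matrix.of fun x y =>
    (if x = y then 1 else 0) +
      ∑ i : Fin 2, ∑ j : Fin 2,
        (V i j - if i = j then 1 else 0) *
          (if (∀ k, x k = i) ∧ (∀ k, y k = j) then 1 else 0)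

/-- The diagonal bond-dimension-5 MPU tensor:
`A^{00} = diag(1,1,0,0,0)`, `A^{11} = diag(1,0,1,0,0)`, `A^{01} = diag(0,0,0,1,0)`,
`A^{10} = diag(0,0,0,0,1)`. -/
def Asub : Fin 2 → Fin 2 → Matrix (Fin 5) (Fin 5) ℂ := fun i j =>
  Matrix.diagonal
    (![![![1, 1, 0, 0, 0], ![0, 0, 0, 1, 0]],
       ![![0, 0, 0, 0, 1], ![1, 0, 1, 0, 0]]] i j)

/-- The boundary matrix `b = diag(1, V₀₀−1, V₁₁−1, V₀₁, V₁₀)`. -/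
def bsub (V : Matrix (Fin 2) (Fin 2) ℂ) : Matrix (Fin 5) (Fin 5) ℂ :=
  Matrix.diagonal ![1, V 0 0 - 1, V 1 1 - 1, V 0 1, V 1 0]

/-- The isometry with columns `|i⟩^{⊗N}`. -/
def Wsub (N : ℕ) : Matrix (Fin N → Fin 2) (Fin 2) ℂ :=
  Matrix.of fun x i => if ∀ k, x k = i then 1 else 0

lemma Wsub_iso (N : ℕ) (hN : 2 ≤ N) : (Wsub N)ᴴ * Wsub N = 1 := by
  have k0 : Fin N := ⟨0, by omega⟩
  ext i j
  rw [Matrix.mul_apply, Finset.sum_eq_single (fun _ => i)]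
  · have hj : (∀ _ : Fin N, i = j) ↔ i = j := ⟨fun h => h k0, fun h _ => h⟩
    simp [Wsub, Matrix.one_apply, hj]
  · intro x _ hx
    have : ¬ ∀ k, x k = i := fun h => hx (funext h)
    simp [Wsub, this]
  · simp

lemma Usub_eq (N : ℕ) (V : Matrix (Fin 2) (Fin 2) ℂ) :
    Usub N V = 1 + Wsub N * (V - 1) * (Wsub N)ᴴ := by
  ext x y
  simp only [Usub, Wsub, Matrix.of_apply, Matrix.add_apply, Matrix.mul_apply, Matrix.one_apply,
    Matrix.sub_apply, Matrix.conjTranspose_apply, Finset.sum_mul]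
  rw [Finset.sum_comm]
  congr 1
  refine Finset.sum_congr rfl fun i _ => Finset.sum_congr rfl fun j _ => ?_
  by_cases h1 : ∀ k, x k = j <;> by_cases h2 : ∀ k, y k = i <;> simp [h1, h2]

lemma prod_diag {ι : Type*} (l : List ι) (d : ι → Fin 5 → ℂ) :
    (l.map (fun k => Matrix.diagonal (d k))).prod
      = Matrix.diagonal (fun a => (l.map (fun k => d k a)).prod) := by
  induction l with
  | nil => simp
  | cons a l ih => simp [ih, Matrix.diagonal_mul_diagonal]

lemma prod_ind (N : ℕ) (f : Fin N → ℂ) (p : Fin N → Prop) [DecidablePred p]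
    (h : ∀ k, f k = if p k then 1 else 0) :
    ((List.finRange N).map f).prod = if ∀ k, p k then 1 else 0 := by
  rw [← List.ofFn_eq_map, List.prod_ofFn, Finset.prod_congr rfl (fun k _ => h k),
    Finset.prod_boole]
  simp

lemma fin2_cases (P : Fin 2 → Fin 2 → Prop) (h00 : P 0 0) (h01 : P 0 1) (h10 : P 1 0)
    (h11 : P 1 1) (i j : Fin 2) : P i j := by
  fin_cases i <;> fin_cases j <;> assumption

/-- For `N ≥ 2` and any `V ∈ U(2)`: (a) `U` is unitary, and (b) `U`
admits the bond-dimension-5 uniform matrix-product representation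
`⟨i|U|j⟩ = Tr(b A^{i_1 j_1} ⋯ A^{i_N j_N})`. -/
theorem stmt_19 (N : ℕ) (hN : 2 ≤ N) (V : Matrix (Fin 2) (Fin 2) ℂ)
    (hV : V ∈ Matrix.unitaryGroup (Fin 2) ℂ) :
    Usub N V ∈ Matrix.unitaryGroup (Fin N → Fin 2) ℂ ∧
    ∀ x y : Fin N → Fin 2,
      Usub N V x y =
        (bsub V * ((List.finRange N).map (fun k => Asub (x k) (y k))).prod).trace := by
  constructor
  · rw [Matrix.mem_unitaryGroup_iff, Matrix.star_eq_conjTranspose, Usub_eq]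
    rw [Matrix.mem_unitaryGroup_iff, Matrix.star_eq_conjTranspose] at hV
    have hW := Wsub_iso N hN
    set W := Wsub N
    have e : (1 + W * (V - 1) * Wᴴ) * (1 + W * (V - 1) * Wᴴ)ᴴ
        = 1 + W * ((V - 1) + (V - 1)ᴴ + (V - 1) * (Wᴴ * W) * (V - 1)ᴴ) * Wᴴ := by
      simp only [Matrix.conjTranspose_add, Matrix.conjTranspose_mul,
        Matrix.conjTranspose_conjTranspose, Matrix.conjTranspose_one, Matrix.mul_add,
        Matrix.add_mul, Matrix.mul_assoc, Matrix.one_mul, Matrix.mul_one]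
      abel
    have e2 : (V - 1) + (V - 1)ᴴ + (V - 1) * (Wᴴ * W) * (V - 1)ᴴ = 0 := by
      rw [hW, Matrix.mul_one, Matrix.conjTranspose_sub, Matrix.conjTranspose_one,
        Matrix.sub_mul, Matrix.mul_sub, hV, Matrix.mul_one, Matrix.one_mul]
      abel
    rw [e, e2]
    simp
  · intro x y
    simp only [Asub, bsub]
    rw [prod_diag, Matrix.diagonal_mul_diagonal, Matrix.trace_diagonal, Fin.sum_univ_five]
    rw [prod_ind N _ (fun k => x k = y k) (fun k => by
        refine fin2_cases (fun i j => (![![![1, 1, 0, 0, 0], ![0, 0, 0, 1, 0]],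
          ![![0, 0, 0, 0, 1], ![1, 0, 1, 0, 0]]] i j : Fin 5 → ℂ) 0 = if i = j then 1 else 0)
          ?_ ?_ ?_ ?_ (x k) (y k) <;> simp)]
    rw [prod_ind N _ (fun k => x k = 0 ∧ y k = 0) (fun k => by
        refine fin2_cases (fun i j => (![![![1, 1, 0, 0, 0], ![0, 0, 0, 1, 0]],
          ![![0, 0, 0, 0, 1], ![1, 0, 1, 0, 0]]] i j : Fin 5 → ℂ) 1
            = if i = 0 ∧ j = 0 then 1 else 0)
          ?_ ?_ ?_ ?_ (x k) (y k) <;> simp)]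
    rw [prod_ind N _ (fun k => x k = 1 ∧ y k = 1) (fun k => by
        refine fin2_cases (fun i j => (![![![1, 1, 0, 0, 0], ![0, 0, 0, 1, 0]],
          ![![0, 0, 0, 0, 1], ![1, 0, 1, 0, 0]]] i j : Fin 5 → ℂ) 2
            = if i = 1 ∧ j = 1 then 1 else 0)
          ?_ ?_ ?_ ?_ (x k) (y k) <;> simp)]
    rw [prod_ind N _ (fun k => x k = 0 ∧ y k = 1) (fun k => by
        refine fin2_cases (fun i j => (![![![1, 1, 0, 0, 0], ![0, 0, 0, 1, 0]],
          ![![0, 0, 0, 0, 1], ![1, 0, 1, 0, 0]]] i j : Fin 5 → ℂ) 3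
            = if i = 0 ∧ j = 1 then 1 else 0)
          ?_ ?_ ?_ ?_ (x k) (y k) <;> simp)]
    rw [prod_ind N _ (fun k => x k = 1 ∧ y k = 0) (fun k => by
        refine fin2_cases (fun i j => (![![![1, 1, 0, 0, 0], ![0, 0, 0, 1, 0]],
          ![![0, 0, 0, 0, 1], ![1, 0, 1, 0, 0]]] i j : Fin 5 → ℂ) 4
            = if i = 1 ∧ j = 0 then 1 else 0)
          ?_ ?_ ?_ ?_ (x k) (y k) <;> simp)]
    simp only [forall_and, ← funext_iff, Usub, Matrix.of_apply, Fin.sum_univ_two]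
    simp
    ring

end
end
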